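/- arXiv:1408.4057 — 3 statements merged into one kernel-verified Lean document; each statement's English description precedes it below -/
import Mathlib

section
/- (Lemma 4.1.) Let d ≥ 1 and β, γ > 0. There exist L > 0, κ = (κ₁,κ₂) ∈ (0,∞)² and a compactly supported probability density in 𝒫^iso_d(β,L) satisfying the κ-margin condition with exponent γ if and only if γβ ≤ 1. -/
open MeasureTheory Real
open scoped ENNReal BigOperators

noncomputable section

/-- `EVec d` is `ℝ^d` with the Euclidean norm. -/
abbrev EVec (d : ℕ) := EuclideanSpace ℝ (Fin d)

/-- The largest integer strictly smaller than `b` (for `b > 0`). -/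
def hfl (b : ℝ) : ℕ := ⌈b⌉₊ - 1

/-- The multivariate Taylor polynomial of `f` at `y` of degree `l`, evaluated at `x`. -/
def taylorPolyMulti {d : ℕ} (f : EVec d → ℝ) (l : ℕ) (y x : EVec d) : ℝ :=
  ∑ k ∈ Finset.range (l + 1),
    (Nat.factorial k : ℝ)⁻¹ * iteratedFDeriv ℝ k f y (fun _ => x - y)

/-- The isotropic Hölder condition with exponent `β` and constant `L` (Euclidean norm):
for `β ≤ 1` a plain Hölder condition; for `β > 1`, `f` is `⌊β⌋` times continuously
differentiable with Taylor remainder of degree `⌊β⌋` bounded by `L ‖x - y‖₂^β`. -/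
def HolderIso (d : ℕ) (β L : ℝ) (f : EVec d → ℝ) : Prop :=
  if β ≤ 1 then ∀ x y : EVec d, |f x - f y| ≤ L * dist x y ^ β
  else ContDiff ℝ (hfl β) f ∧
    ∀ x y : EVec d, |f x - taylorPolyMulti f (hfl β) y x| ≤ L * dist x y ^ β

/-- `p` is a probability density on `ℝ^d` (Lebesgue measure on Euclidean space). -/
def IsProbDensityE (d : ℕ) (p : EVec d → ℝ) : Prop :=
  Measurable p ∧ (∀ x, 0 ≤ p x) ∧ ∫ x, p x = 1

/-- The `κ`-margin condition with exponent `γ`: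
`λ^d(closure{x : 0 < p(x) ≤ ε}) ≤ κ₂ ε^γ` for all `0 < ε ≤ κ₁`. -/
def MarginCond (d : ℕ) (γ κ1 κ2 : ℝ) (p : EVec d → ℝ) : Prop :=
  ∀ ε : ℝ, 0 < ε → ε ≤ κ1 →
    volume (closure {x | 0 < p x ∧ p x ≤ ε}) ≤ ENNReal.ofReal (κ2 * ε ^ γ)

/-- The support `Γ_p = closure{p > 0}` of a density. -/
def supportOf {d : ℕ} (p : EVec d → ℝ) : Set (EVec d) := closure {x | 0 < p x}

/-- The `ξ`-complexity condition to the exponent `μ`: for every `0 < ε ≤ ξ₁` there is a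
disjoint decomposition `A = A₁ ∪ A₂` with
`λ^d(A₁^ε ∖ A₁) ∨ λ^d(A₂) ≤ ξ₂ ε^μ` (`A₁^ε` the closed outer `ε`-parallel set). -/
def ComplexityCond (d : ℕ) (ξ1 ξ2 μ : ℝ) (A : Set (EVec d)) : Prop :=
  ∀ ε : ℝ, 0 < ε → ε ≤ ξ1 →
    ∃ A1 A2 : Set (EVec d), A = A1 ∪ A2 ∧ Disjoint A1 A2 ∧
      volume (Metric.cthickening ε A1 \ A1) ≤ ENNReal.ofReal (ξ2 * ε ^ μ) ∧
      volume A2 ≤ ENNReal.ofReal (ξ2 * ε ^ μ)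

/-- The class `𝒫^iso_d(β, L, γ, κ, ξ)`: isotropic `(β,L)`-Hölder densities satisfying the
`κ`-margin condition with exponent `γ`, whose support satisfies the `ξ`-complexity
condition to the exponent `μ = γβ`. -/
def PIsoFull (d : ℕ) (β L γ κ1 κ2 ξ1 ξ2 : ℝ) (p : EVec d → ℝ) : Prop :=
  IsProbDensityE d p ∧ HolderIso d β L p ∧ MarginCond d γ κ1 κ2 p ∧
    ComplexityCond d ξ1 ξ2 (γ * β) (supportOf p)

/-- The joint law of an i.i.d. sample of size `n` from the density `p`. -/
def jointMeasureE (d n : ℕ) (p : EVec d → ℝ) : Measure (Fin n → EVec d) :=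
  Measure.pi fun _ => volume.withDensity fun x => ENNReal.ofReal (p x)

end

section Erosion

variable {E : Type*} [NormedAddCommGroup E] [MeasurableSpace E] [BorelSpace E]

lemma measure_translate_diff_le (μ : Measure E) [μ.IsAddRightInvariant] (A : Set E) (v : E)
    (n : ℕ) : μ ((fun x => x + n • v) ⁻¹' A \ A) ≤ n * μ ((fun x => x + v) ⁻¹' A \ A) := by
  induction n with
  | zero => simp
  | succ n ih =>
    have hsub : (fun x => x + (n + 1) • v) ⁻¹' A \ A ⊆
        (fun x => x + n • v) ⁻¹' ((fun x => x + v) ⁻¹' A \ A) ∪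
          ((fun x => x + n • v) ⁻¹' A \ A) := by
      rintro x ⟨hx, hxA⟩
      by_cases h : x + n • v ∈ A
      · exact Or.inr ⟨h, hxA⟩
      · refine Or.inl ⟨?_, h⟩
        simpa [add_assoc, succ_nsmul] using hx
    calc μ ((fun x => x + (n + 1) • v) ⁻¹' A \ A)
        ≤ μ ((fun x => x + n • v) ⁻¹' ((fun x => x + v) ⁻¹' A \ A)) +
          μ ((fun x => x + n • v) ⁻¹' A \ A) := (measure_mono hsub).trans (measure_union_le _ _)
      _ ≤ μ ((fun x => x + v) ⁻¹' A \ A) + n * μ ((fun x => x + v) ⁻¹' A \ A) := by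
          rw [measure_preimage_add_right]
          gcongr
      _ = (n + 1 : ℕ) * μ ((fun x => x + v) ⁻¹' A \ A) := by
          push_cast
          ring

/-- A bounded set has at least a fraction `1 / (n + 1)` of its measure within distance `δ` of its
complement, once `n` translations by less than `δ` suffice to leave the set. -/
lemma measure_le_mul_measure_near_compl [NormedSpace ℝ E] (μ : Measure E)
    [μ.IsAddRightInvariant] {K : Set E}
    {R δ : ℝ} (hK : K ⊆ Metric.closedBall 0 R) {v : E} (hv : ‖v‖ < δ) {n : ℕ}
    (hn : 2 * R < n * ‖v‖) :
    μ K ≤ (n + 1) * μ (K \ {x | Metric.ball x δ ⊆ K}) := by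
  set A : Set E := {x | Metric.ball x δ ⊆ K}
  have hδ : 0 < δ := (norm_nonneg v).trans_lt hv
  have hAK : A ⊆ K := fun x hx => hx (Metric.mem_ball_self hδ)
  have hshift : (fun x => x + v) ⁻¹' A \ A ⊆ K \ A := by
    rintro x ⟨hx, hxA⟩
    refine ⟨hx ?_, hxA⟩
    simpa [Metric.mem_ball, dist_eq_norm] using hv
  have hdisj : (fun x => x + n • v) ⁻¹' A \ A = (fun x => x + n • v) ⁻¹' A := by
    refine sdiff_eq_left.mpr (Set.disjoint_left.mpr ?_)
    intro x hx hxA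
    have h1 : ‖x + n • v‖ ≤ R := by simpa using hK (hAK hx)
    have h2 : ‖x‖ ≤ R := by simpa using hK (hAK hxA)
    have h3 : ‖n • v‖ ≤ ‖x + n • v‖ + ‖x‖ := by
      simpa using norm_sub_le (x + n • v) x
    have h4 : ‖n • v‖ = n * ‖v‖ := by
      rw [← Nat.cast_smul_eq_nsmul ℝ, norm_smul]; simp
    linarith
  have hA : μ A ≤ n * μ (K \ A) := by
    calc μ A = μ ((fun x => x + n • v) ⁻¹' A \ A) := by rw [hdisj, measure_preimage_add_right]
      _ ≤ n * μ ((fun x => x + v) ⁻¹' A \ A) := measure_translate_diff_le μ A v n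
      _ ≤ n * μ (K \ A) := by gcongr
  calc μ K ≤ μ (A ∪ K \ A) := measure_mono (by simp)
    _ ≤ μ A + μ (K \ A) := measure_union_le _ _
    _ ≤ n * μ (K \ A) + μ (K \ A) := by gcongr
    _ = (n + 1) * μ (K \ A) := by ring

end Erosion

section Necessity

variable {d : ℕ} {β L : ℝ} {p : EVec d → ℝ}

lemma HolderIso.le_dist_rpow_of_notMem_tsupport (h : HolderIso d β L p) {y : EVec d}
    (hy : y ∉ tsupport p) (x : EVec d) : p x ≤ L * dist x y ^ β := by
  have hpy : p y = 0 := image_eq_zero_of_notMem_tsupport hy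
  unfold HolderIso at h
  split_ifs at h
  · have := h x y
    rw [hpy, sub_zero] at this
    exact (le_abs_self _).trans this
  · have hT : taylorPolyMulti p (hfl β) y x = 0 := by
      refine Finset.sum_eq_zero fun k _ => ?_
      have : iteratedFDeriv ℝ k p y = 0 := by
        by_contra hne
        exact hy (support_iteratedFDeriv_subset k hne)
      simp [this]
    have := h.2 x y
    rw [hT, sub_zero] at this
    exact (le_abs_self _).trans this

lemma IsProbDensityE.volume_tsupport_pos (h : IsProbDensityE d p) :
    0 < volume (tsupport p) := by
  refine pos_iff_ne_zero.mpr fun h0 => ?_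
  have hae : p =ᵐ[volume] 0 := by
    have : ∀ᵐ x, x ∉ tsupport p := measure_eq_zero_iff_ae_notMem.mp h0
    filter_upwards [this] with x hx using image_eq_zero_of_notMem_tsupport hx
  have := h.2.2
  rw [integral_congr_ae hae] at this
  simp at this

lemma HolderIso.near_compl_subset (h : HolderIso d β L p) (hβ : 0 < β) (hL : 0 < L)
    (hp : ∀ x, 0 ≤ p x) (δ : ℝ) :
    tsupport p \ {x | Metric.ball x δ ⊆ tsupport p} ⊆
      closure {x | 0 < p x ∧ p x ≤ L * δ ^ β} := by
  rintro x ⟨hx, hxδ⟩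
  obtain ⟨y, hyx, hy⟩ := Set.not_subset.mp hxδ
  have hball : Metric.ball y δ ∈ nhds x :=
    Metric.isOpen_ball.mem_nhds (by rwa [Metric.mem_ball'] at hyx)
  refine mem_closure_iff_nhds.mpr fun t ht => ?_
  obtain ⟨z, ⟨hzt, hzy⟩, hz⟩ := mem_closure_iff_nhds.mp hx _ (Filter.inter_mem ht hball)
  refine ⟨z, hzt, (hp z).lt_of_ne' hz, (h.le_dist_rpow_of_notMem_tsupport hy z).trans ?_⟩
  have := (Metric.mem_ball.mp hzy).le
  gcongr

theorem mul_le_one_of_marginCond (hd : 1 ≤ d) {γ κ1 κ2 : ℝ} (hβ : 0 < β)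
    (hL : 0 < L) (hκ1 : 0 < κ1) (hκ2 : 0 < κ2) (hp : IsProbDensityE d p)
    (hH : HolderIso d β L p) (hc : HasCompactSupport p) (hM : MarginCond d γ κ1 κ2 p) :
    γ * β ≤ 1 := by
  by_contra! hlt
  obtain ⟨R, hR⟩ := hc.isCompact.isBounded.subset_closedBall 0
  have hfin : volume (tsupport p) ≠ ⊤ := hc.isCompact.measure_lt_top.ne
  have hpos : 0 < (volume (tsupport p)).toReal :=
    ENNReal.toReal_pos hp.volume_tsupport_pos.ne' hfin
  have hR0 : 0 ≤ R := by
    by_contra! hneg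
    have hemp : tsupport p = ∅ := by
      rw [← Set.subset_empty_iff]; rwa [Metric.closedBall_eq_empty.mpr hneg] at hR
    simp [hemp] at hpos
  have key : ∀ δ : ℝ, 0 < δ → L * δ ^ β ≤ κ1 →
      (volume (tsupport p)).toReal ≤
        κ2 * L ^ γ * (4 * R * δ ^ (γ * β - 1) + 3 * δ ^ (γ * β)) := by
    intro δ hδ hδκ
    have hε : 0 < L * δ ^ β := by positivity
    set v : EVec d := EuclideanSpace.single ⟨0, hd⟩ (δ / 2) with hvdef
    have hv : ‖v‖ = δ / 2 := by
      rw [hvdef, PiLp.norm_single, Real.norm_of_nonneg (by positivity)]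
    set n : ℕ := ⌊4 * R / δ⌋₊ + 1 with hn
    have hn1 : 4 * R / δ < n := by rw [hn]; exact_mod_cast Nat.lt_floor_add_one (4 * R / δ)
    have hn2 : (n : ℝ) ≤ 4 * R / δ + 1 := by
      rw [hn]; push_cast; gcongr; exact Nat.floor_le (by positivity)
    have h1 := measure_le_mul_measure_near_compl volume hR (v := v) (δ := δ) (n := n)
      (by rw [hv]; linarith) (by rw [hv]; rw [div_lt_iff₀ hδ] at hn1; linarith)
    have h2 : volume (tsupport p) ≤ ENNReal.ofReal ((n + 1) * (κ2 * (L * δ ^ β) ^ γ)) := by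
      calc volume (tsupport p) ≤ _ := h1
        _ ≤ (n + 1) * ENNReal.ofReal (κ2 * (L * δ ^ β) ^ γ) := by
            gcongr
            exact (measure_mono (hH.near_compl_subset hβ hL hp.2.1 δ)).trans (hM _ hε hδκ)
        _ = ENNReal.ofReal ((n + 1) * (κ2 * (L * δ ^ β) ^ γ)) := by
            rw [ENNReal.ofReal_mul (p := (n : ℝ) + 1) (by positivity),
              ENNReal.ofReal_add (by positivity) zero_le_one, ENNReal.ofReal_natCast,
              ENNReal.ofReal_one]
    have h3 := ENNReal.toReal_le_of_le_ofReal (by positivity) h2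
    refine h3.trans ?_
    rw [Real.mul_rpow hL.le (by positivity), ← Real.rpow_mul hδ.le, mul_comm β γ,
      Real.rpow_sub_one hδ.ne']
    calc (n + 1) * (κ2 * (L ^ γ * δ ^ (γ * β)))
        ≤ (4 * R / δ + 3) * (κ2 * (L ^ γ * δ ^ (γ * β))) := by
          gcongr ?_ * _
          linarith
      _ = _ := by ring
  have hlim : Filter.Tendsto
      (fun δ : ℝ => κ2 * L ^ γ * (4 * R * δ ^ (γ * β - 1) + 3 * δ ^ (γ * β)))
      (nhdsWithin 0 (Set.Ioi 0)) (nhds 0) := by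
    have hcont : ContinuousAt
        (fun δ : ℝ => κ2 * L ^ γ * (4 * R * δ ^ (γ * β - 1) + 3 * δ ^ (γ * β))) 0 := by
      have h1 : ContinuousAt (fun δ : ℝ => δ ^ (γ * β - 1)) 0 :=
        Real.continuousAt_rpow_const _ _ (Or.inr (by linarith))
      have h2 : ContinuousAt (fun δ : ℝ => δ ^ (γ * β)) 0 :=
        Real.continuousAt_rpow_const _ _ (Or.inr (by linarith))
      fun_prop
    have := hcont.tendsto
    rw [Real.zero_rpow (by linarith), Real.zero_rpow (by linarith)] at this
    simp only [mul_zero, add_zero] at this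
    exact this.mono_left nhdsWithin_le_nhds
  have hsmall : ∀ᶠ δ : ℝ in nhdsWithin 0 (Set.Ioi 0), L * δ ^ β ≤ κ1 := by
    have hcont : ContinuousAt (fun δ : ℝ => L * δ ^ β) 0 :=
      continuousAt_const.mul (Real.continuousAt_rpow_const _ _ (Or.inr hβ.le))
    have ht := hcont.tendsto
    rw [Real.zero_rpow hβ.ne', mul_zero] at ht
    exact ((ht.mono_left nhdsWithin_le_nhds).eventually_lt_const hκ1).mono fun _ h => h.le
  refine absurd (ge_of_tendsto hlim ?_) (not_le.mpr hpos)
  filter_upwards [hsmall, self_mem_nhdsWithin] with δ h1 h2 using key δ h2 h1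

end Necessity

section TaylorRemainder

variable {E F : Type*} [NormedAddCommGroup E] [NormedSpace ℝ E]
  [NormedAddCommGroup F] [NormedSpace ℝ F]

/-- The Taylor sum of degree `l` at `y` for a map with values in a normed space. -/
noncomputable def taylorSum (f : E → F) (l : ℕ) (y x : E) : F :=
  ∑ k ∈ Finset.range (l + 1), (k.factorial : ℝ)⁻¹ • iteratedFDeriv ℝ k f y (fun _ => x - y)

lemma taylorSum_zero (f : E → F) (y x : E) : taylorSum f 0 y x = f y := by
  simp [taylorSum]

lemma taylorSum_self (f : E → F) (l : ℕ) (y : E) : taylorSum f l y y = f y := by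
  rw [taylorSum, Finset.sum_eq_single 0]
  · simp
  · intro k _ hk
    obtain ⟨m, rfl⟩ := Nat.exists_eq_succ_of_ne_zero hk
    rw [(iteratedFDeriv ℝ (m + 1) f y).map_coord_zero 0 (by simp), smul_zero]
  · simp

lemma taylorSum_succ_line (f : E → F) (l : ℕ) (y v : E) (t : ℝ) :
    taylorSum f (l + 1) y (y + t • v) = f y + ∑ k ∈ Finset.range (l + 1),
      t ^ (k + 1) • (((k + 1).factorial : ℝ)⁻¹ •
        iteratedFDeriv ℝ k (fderiv ℝ f) y (fun _ => v) v) := by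
  rw [taylorSum, Finset.sum_range_succ', add_comm]
  congr 1
  · simp
  · refine Finset.sum_congr rfl fun k _ => ?_
    have hv : (fun _ : Fin (k + 1) => y + t • v - y) = fun _ : Fin (k + 1) => t • v := by
      funext i; simp
    rw [hv, (iteratedFDeriv ℝ (k + 1) f y).map_smul_univ (fun _ => t) (fun _ => v),
      iteratedFDeriv_succ_apply_right, smul_comm]
    simp [Fin.init_def]

lemma hasDerivAt_taylorSum_line (f : E → F) (l : ℕ) (y v : E) (t : ℝ) :
    HasDerivAt (fun t : ℝ => taylorSum f (l + 1) y (y + t • v))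
      (taylorSum (fderiv ℝ f) l y (y + t • v) v) t := by
  simp only [taylorSum_succ_line]
  have hval : taylorSum (fderiv ℝ f) l y (y + t • v) v = ∑ k ∈ Finset.range (l + 1),
      ((k + 1 : ℕ) * t ^ k) • (((k + 1).factorial : ℝ)⁻¹ •
        iteratedFDeriv ℝ k (fderiv ℝ f) y (fun _ => v) v) := by
    rw [taylorSum, sum_apply]
    refine Finset.sum_congr rfl fun k _ => ?_
    have hv : (fun _ : Fin k => y + t • v - y) = fun _ : Fin k => t • v := by
      funext i; simp
    rw [hv, (iteratedFDeriv ℝ k (fderiv ℝ f) y).map_smul_univ (fun _ => t) (fun _ => v)]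
    simp only [Finset.prod_const, Finset.card_univ, Fintype.card_fin,
      smul_apply, smul_smul]
    congr 1
    rw [Nat.factorial_succ]
    push_cast
    have h1 : (k.factorial : ℝ) ≠ 0 := by positivity
    have h2 : (k : ℝ) + 1 ≠ 0 := by positivity
    field_simp
  rw [hval]
  refine HasDerivAt.const_add _ (HasDerivAt.fun_sum fun k _ => ?_)
  simpa using (hasDerivAt_pow (k + 1) t).smul_const (((k + 1).factorial : ℝ)⁻¹ •
        iteratedFDeriv ℝ k (fderiv ℝ f) y (fun _ => v) v)

/-- A remainder bound for the Taylor sums of the derivative integrates to one for the map. -/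
lemma norm_sub_taylorSum_succ_le {f : E → F} (hf : Differentiable ℝ f) {l : ℕ} {C s : ℝ}
    (hC : 0 ≤ C) (hs : 0 < s)
    (h : ∀ x y, ‖fderiv ℝ f x - taylorSum (fderiv ℝ f) l y x‖ ≤ C * dist x y ^ s) (x y : E) :
    ‖f x - taylorSum f (l + 1) y x‖ ≤ C * dist x y ^ (s + 1) := by
  set v := x - y with hv
  have hder : ∀ t : ℝ, HasDerivAt
      (fun t : ℝ => f (y + t • v) - taylorSum f (l + 1) y (y + t • v))
      ((fderiv ℝ f (y + t • v) - taylorSum (fderiv ℝ f) l y (y + t • v)) v) t := by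
    intro t
    have hline : HasDerivAt (fun t : ℝ => y + t • v) v t := by
      simpa using ((hasDerivAt_id t).smul_const v).const_add y
    exact ((hf _).hasFDerivAt.comp_hasDerivAt t hline).sub
      (hasDerivAt_taylorSum_line f l y v t)
  have := norm_image_sub_le_of_norm_deriv_le_segment_01' (C := C * dist x y ^ (s + 1))
    (fun t _ => (hder t).hasDerivWithinAt) (fun t ht => ?_)
  · simpa [taylorSum_self, hv] using this
  · have hd : dist (y + t • v) y ≤ dist x y := by
      rw [dist_eq_norm, dist_eq_norm, add_sub_cancel_left, norm_smul, Real.norm_of_nonneg ht.1]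
      exact mul_le_of_le_one_left (norm_nonneg _) ht.2.le
    have hbound : ‖fderiv ℝ f (y + t • v) - taylorSum (fderiv ℝ f) l y (y + t • v)‖ ≤
        C * dist x y ^ s := by
      refine (h _ _).trans ?_
      gcongr
    have hvn : ‖v‖ = dist x y := (dist_eq_norm x y).symm
    calc ‖(fderiv ℝ f (y + t • v) - taylorSum (fderiv ℝ f) l y (y + t • v)) v‖
        ≤ C * dist x y ^ s * dist x y :=
          hvn ▸ ContinuousLinearMap.le_of_opNorm_le _ hbound v
      _ = C * dist x y ^ (s + 1) := by
          rw [mul_assoc]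
          congr 1
          rcases eq_or_ne (dist x y) 0 with h0 | h0
          · rw [h0, Real.zero_rpow hs.ne', Real.zero_rpow (by linarith), mul_zero]
          · rw [Real.rpow_add_one h0]

end TaylorRemainder

section Bump

lemma abs_rpow_sub_rpow_le {s a b : ℝ} (ha : 0 ≤ a) (hb : 0 ≤ b) (hs : 0 ≤ s) (hs1 : s ≤ 1) :
    |a ^ s - b ^ s| ≤ |a - b| ^ s := by
  wlog hab : b ≤ a generalizing a b
  · rw [abs_sub_comm, abs_sub_comm a b]
    exact this hb ha (le_of_not_ge hab)
  have h1 : b ^ s ≤ a ^ s := Real.rpow_le_rpow hb hab hs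
  rw [abs_of_nonneg (sub_nonneg.mpr h1), abs_of_nonneg (sub_nonneg.mpr hab)]
  have := Real.rpow_add_le_add_rpow hb (sub_nonneg.mpr hab) hs hs1
  rw [add_sub_cancel] at this
  linarith

lemma hasDerivAt_max_zero_rpow {s : ℝ} (hs : 1 < s) (t : ℝ) :
    HasDerivAt (fun t : ℝ => max t 0 ^ s) (s * max t 0 ^ (s - 1)) t := by
  rcases lt_trichotomy t 0 with ht | rfl | ht
  · rw [max_eq_right ht.le, Real.zero_rpow (by linarith), mul_zero]
    refine (hasDerivAt_const t (0 : ℝ)).congr_of_eventuallyEq ?_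
    filter_upwards [gt_mem_nhds ht] with u hu
    rw [max_eq_right hu.le, Real.zero_rpow (by linarith)]
  · have h1 : HasDerivWithinAt (fun t : ℝ => max t 0 ^ s) (s * max 0 0 ^ (s - 1))
        (Set.Ici 0) 0 := by
      rw [max_self]
      refine (Real.hasDerivAt_rpow_const (Or.inr hs.le)).hasDerivWithinAt.congr ?_ (by simp)
      intro u hu
      rw [max_eq_left hu]
    have h2 : HasDerivWithinAt (fun t : ℝ => max t 0 ^ s) (s * max 0 0 ^ (s - 1))
        (Set.Iic 0) 0 := by
      rw [max_self, Real.zero_rpow (by linarith), mul_zero]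
      refine (hasDerivWithinAt_const (0 : ℝ) _ (0 : ℝ)).congr ?_ ?_
      · intro u hu
        rw [max_eq_right hu, Real.zero_rpow (by linarith)]
      · rw [max_self, Real.zero_rpow (by linarith)]
    simpa [Set.Ici_union_Iic] using h1.union h2
  · rw [max_eq_left ht.le]
    refine (Real.hasDerivAt_rpow_const (Or.inr hs.le)).congr_of_eventuallyEq ?_
    filter_upwards [lt_mem_nhds ht] with u hu
    rw [max_eq_left hu.le]

universe u

variable {E : Type u} [NormedAddCommGroup E]

/-- The power `(1 - ‖x‖²)₊ ^ s`, supported in the closed unit ball. -/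
noncomputable def ballBump (s : ℝ) (x : E) : ℝ := max (1 - ‖x‖ ^ 2) 0 ^ s

lemma ballBump_nonneg (s : ℝ) (x : E) : 0 ≤ ballBump s x :=
  Real.rpow_nonneg (le_max_right _ _) _

lemma ballBump_of_one_le_norm {s : ℝ} (hs : 0 < s) {x : E} (hx : 1 ≤ ‖x‖) :
    ballBump s x = 0 := by
  have : 1 - ‖x‖ ^ 2 ≤ 0 := by nlinarith
  rw [ballBump, max_eq_right this, Real.zero_rpow hs.ne']

lemma ballBump_eq_mul {s : ℝ} (hs : 1 < s) (x : E) :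
    ballBump s x = ballBump (s - 1) x * (1 - ‖x‖ ^ 2) := by
  rcases le_or_gt (1 - ‖x‖ ^ 2) 0 with h | h
  · rw [ballBump, ballBump, max_eq_right h, Real.zero_rpow (by linarith),
      Real.zero_rpow (by linarith), zero_mul]
  · rw [ballBump, ballBump, max_eq_left h.le, ← Real.rpow_add_one h.ne', sub_add_cancel]

lemma abs_ballBump_sub_le {s : ℝ} (hs : 0 < s) (hs1 : s ≤ 1) (x y : E) :
    |ballBump s x - ballBump s y| ≤ 2 ^ s * dist x y ^ s := by
  refine (abs_rpow_sub_rpow_le (le_max_right _ _) (le_max_right _ _) hs.le hs1).trans ?_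
  rw [← Real.mul_rpow zero_le_two dist_nonneg]
  gcongr
  wlog hxy : ‖x‖ ≤ ‖y‖ generalizing x y
  · rw [abs_sub_comm, dist_comm]
    exact this y x (le_of_not_ge hxy)
  have hd : ‖y‖ - ‖x‖ ≤ dist x y := by
    rw [dist_comm, dist_eq_norm]; exact norm_sub_norm_le y x
  have hx := norm_nonneg x
  have hle : max (1 - ‖y‖ ^ 2) 0 ≤ max (1 - ‖x‖ ^ 2) 0 := by gcongr
  rw [abs_of_nonneg (sub_nonneg.mpr hle)]
  rcases le_or_gt 1 ‖x‖ with h1 | h1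
  · rw [max_eq_right (show 1 - ‖x‖ ^ 2 ≤ 0 by nlinarith)]
    have := le_max_right (1 - ‖y‖ ^ 2) 0
    have : 0 ≤ dist x y := dist_nonneg
    linarith
  · rw [max_eq_left (show 0 ≤ 1 - ‖x‖ ^ 2 by nlinarith)]
    rcases le_or_gt 1 ‖y‖ with h2 | h2
    · have := le_max_right (1 - ‖y‖ ^ 2) 0
      nlinarith
    · have := le_max_left (1 - ‖y‖ ^ 2) 0
      nlinarith

lemma ballBump_le_one {s : ℝ} (hs : 0 ≤ s) (x : E) : ballBump s x ≤ 1 :=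
  Real.rpow_le_one (le_max_right _ _) (max_le (by nlinarith [norm_nonneg x]) zero_le_one) hs

lemma continuous_ballBump {s : ℝ} (hs : 0 ≤ s) : Continuous (ballBump s : E → ℝ) :=
  Continuous.rpow_const (by fun_prop) fun _ => Or.inr hs

variable [InnerProductSpace ℝ E]

lemma hasFDerivAt_ballBump {s : ℝ} (hs : 1 < s) (x : E) :
    HasFDerivAt (ballBump s) (ballBump (s - 1) x • (-(2 * s)) • innerSL ℝ x) x := by
  have h1 : HasFDerivAt (fun x : E => 1 - ‖x‖ ^ 2) (-(2 • innerSL ℝ x)) x :=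
    (hasStrictFDerivAt_norm_sq x).hasFDerivAt.const_sub 1
  refine ((hasDerivAt_max_zero_rpow hs (1 - ‖x‖ ^ 2)).comp_hasFDerivAt x h1).congr_fderiv ?_
  ext v
  simp [ballBump]
  ring

lemma exists_holder_ballBump_smul {F : Type*} [NormedAddCommGroup F] [NormedSpace ℝ F]
    [ProperSpace E] {c : E → F} (hc : ContDiff ℝ 1 c) {s : ℝ} (hs : 0 < s) (hs1 : s ≤ 1) :
    ∃ C : ℝ, 0 ≤ C ∧ ∀ x y : E,
      ‖ballBump s x • c x - ballBump s y • c y‖ ≤ C * dist x y ^ s := by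
  have hK : IsCompact (Metric.closedBall (0 : E) 1) := isCompact_closedBall 0 1
  obtain ⟨M, hM⟩ := hK.exists_bound_of_continuousOn hc.continuous.continuousOn
  obtain ⟨D, hD⟩ := hK.exists_bound_of_continuousOn
    (hc.continuous_fderiv one_ne_zero).continuousOn
  have hM0 : 0 ≤ M := (norm_nonneg _).trans (hM 0 (by simp))
  have hD0 : 0 ≤ D := (norm_nonneg _).trans (hD 0 (by simp))
  have hlip : ∀ x y : E, ‖x‖ ≤ 1 → ‖y‖ ≤ 1 → ‖c x - c y‖ ≤ D * dist x y := by
    intro x y hx hy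
    rw [dist_eq_norm]
    exact (convex_closedBall (0 : E) 1).norm_image_sub_le_of_norm_fderiv_le
      (fun z _ => hc.differentiable one_ne_zero z) hD (by simpa using hy) (by simpa using hx)
  refine ⟨2 ^ s * M + 2 * D, by positivity, ?_⟩
  have hin : ∀ x y : E, ‖x‖ ≤ 1 →
      ‖ballBump s x • c x - ballBump s y • c y‖ ≤ (2 ^ s * M + 2 * D) * dist x y ^ s := by
    intro x y hx
    have hfirst : ‖(ballBump s x - ballBump s y) • c x‖ ≤ 2 ^ s * M * dist x y ^ s := by
      rw [norm_smul, Real.norm_eq_abs]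
      calc |ballBump s x - ballBump s y| * ‖c x‖ ≤ 2 ^ s * dist x y ^ s * M := by
            gcongr
            · exact abs_ballBump_sub_le hs hs1 x y
            · exact hM x (by simpa using hx)
        _ = _ := by ring
    have hsecond : ‖ballBump s y • (c x - c y)‖ ≤ 2 * D * dist x y ^ s := by
      rcases le_or_gt 1 ‖y‖ with hy | hy
      · rw [ballBump_of_one_le_norm hs hy, zero_smul, norm_zero]
        positivity
      · have hdist : dist x y ≤ 2 := by
          have := norm_sub_le x y
          rw [dist_eq_norm]
          linarith
        have hpow : dist x y ≤ 2 * dist x y ^ s := by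
          have h2 : dist x y / 2 ≤ (dist x y / 2) ^ s :=
            Real.self_le_rpow_of_le_one (by positivity) (by linarith) hs1
          have h3 : (dist x y / 2) ^ s ≤ dist x y ^ s := by
            gcongr
            linarith [dist_nonneg (x := x) (y := y)]
          linarith
        rw [norm_smul, Real.norm_of_nonneg (ballBump_nonneg _ _)]
        calc ballBump s y * ‖c x - c y‖ ≤ 1 * (D * dist x y) := by
              gcongr
              · exact ballBump_le_one hs.le y
              · exact hlip x y hx hy.le
          _ ≤ 1 * (D * (2 * dist x y ^ s)) := by gcongr
          _ = _ := by ring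
    calc ‖ballBump s x • c x - ballBump s y • c y‖
        = ‖(ballBump s x - ballBump s y) • c x + ballBump s y • (c x - c y)‖ := by
          congr 1
          module
      _ ≤ _ := norm_add_le _ _
      _ ≤ _ := by linarith
  intro x y
  rcases le_or_gt ‖x‖ 1 with hx | hx
  · exact hin x y hx
  rcases le_or_gt ‖y‖ 1 with hy | hy
  · rw [norm_sub_rev, dist_comm]
    exact hin y x hy
  · rw [ballBump_of_one_le_norm hs hx.le, ballBump_of_one_le_norm hs hy.le]
    simp
    positivity

/-- The product of `(1 - ‖x‖²)₊ ^ s` with a smooth map is `s`-Hölder smooth. -/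
theorem ballBump_smul_holder [ProperSpace E] (l : ℕ) :
    ∀ {F : Type u} [NormedAddCommGroup F] [NormedSpace ℝ F] {c : E → F},
      ContDiff ℝ (⊤ : ℕ∞) c → ∀ {s : ℝ}, l < s → s ≤ l + 1 →
      ContDiff ℝ l (fun x => ballBump s x • c x) ∧ ∃ C : ℝ, 0 ≤ C ∧ ∀ x y : E,
        ‖ballBump s x • c x - taylorSum (fun x => ballBump s x • c x) l y x‖
          ≤ C * dist x y ^ s := by
  induction l with
  | zero =>
    intro F _ _ c hc s hs hs1
    simp only [Nat.cast_zero, zero_add] at hs hs1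
    refine ⟨?_, ?_⟩
    · exact contDiff_zero.mpr ((continuous_ballBump hs.le).smul hc.continuous)
    · simpa only [taylorSum_zero] using
        exists_holder_ballBump_smul (hc.of_le (by exact_mod_cast le_top)) hs hs1
  | succ l ih =>
    intro F _ _ c hc s hs hs1
    push_cast at hs hs1
    have hl : (0 : ℝ) ≤ l := l.cast_nonneg
    set c' : E → E →L[ℝ] F := fun x =>
      (1 - ‖x‖ ^ 2) • fderiv ℝ c x + ((-(2 * s)) • innerSL ℝ x).smulRight (c x) with hc'
    have hder : ∀ x, HasFDerivAt (fun x => ballBump s x • c x) (ballBump (s - 1) x • c' x) x := by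
      intro x
      have h1 := hasFDerivAt_ballBump (E := E) (s := s) (by linarith) x
      have h2 := ((hc.differentiable (by simp)) x).hasFDerivAt
      refine (h1.smul h2).congr_fderiv ?_
      ext v
      simp [hc', ballBump_eq_mul (show 1 < s by linarith) x, smul_smul, mul_assoc]
    have hfd : fderiv ℝ (fun x => ballBump s x • c x) = fun x => ballBump (s - 1) x • c' x :=
      funext fun x => (hder x).fderiv
    have hsm : ContDiff ℝ (⊤ : ℕ∞) c' := by
      have h1 : ContDiff ℝ (⊤ : ℕ∞) (fderiv ℝ c) := hc.fderiv_right (by simp)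
      have h2 : ContDiff ℝ (⊤ : ℕ∞) (fun x : E => (-(2 * s)) • innerSL ℝ x) :=
        (innerSL ℝ : E →L⋆[ℝ] E →L[ℝ] ℝ).contDiff.const_smul _
      exact ((contDiff_const.sub (contDiff_norm_sq ℝ)).smul h1).add (h2.smulRight hc)
    obtain ⟨hcd, C, hC, hrem⟩ := ih hsm (s := s - 1) (by linarith) (by linarith)
    refine ⟨?_, C, hC, fun x y => ?_⟩
    · exact_mod_cast contDiff_succ_iff_hasFDerivAt.mpr ⟨_, hcd, hder⟩
    · have := norm_sub_taylorSum_succ_le (fun x => (hder x).differentiableAt) hC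
        (show 0 < s - 1 by linarith) (by rw [hfd]; exact hrem) x y
      simpa using this

end Bump

section Sufficiency

lemma hfl_lt_and_le {β : ℝ} (hβ : 0 < β) : (hfl β : ℝ) < β ∧ β ≤ hfl β + 1 := by
  have h1 : 1 ≤ ⌈β⌉₊ := Nat.one_le_ceil_iff.mpr hβ
  have h2 : hfl β + 1 = ⌈β⌉₊ := Nat.sub_add_cancel h1
  refine ⟨Nat.lt_ceil.mp (by omega), ?_⟩
  exact_mod_cast h2 ▸ Nat.le_ceil β

lemma hasCompactSupport_ballBump {E : Type*} [NormedAddCommGroup E] [ProperSpace E] {s : ℝ}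
    (hs : 0 < s) : HasCompactSupport (ballBump s : E → ℝ) := by
  refine HasCompactSupport.intro (isCompact_closedBall (0 : E) 1) fun x hx => ?_
  refine ballBump_of_one_le_norm hs (le_of_lt ?_)
  simpa using hx

variable {d : ℕ}

lemma exists_holderIso_ballBump {β : ℝ} (hβ : 0 < β) (a : ℝ) :
    ∃ L : ℝ, 0 < L ∧ HolderIso d β L (fun x => ballBump β x * a) := by
  obtain ⟨h1, h2⟩ := hfl_lt_and_le hβ
  obtain ⟨hcd, C, hC, hrem⟩ := ballBump_smul_holder (E := EVec d) (hfl β)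
    (contDiff_const (c := a)) h1 h2
  simp only [smul_eq_mul] at hcd hrem
  have hrem' : ∀ x y : EVec d, |ballBump β x * a -
      taylorSum (fun x => ballBump β x * a) (hfl β) y x| ≤ (C + 1) * dist x y ^ β :=
    fun x y => (hrem x y).trans (by gcongr; linarith)
  refine ⟨C + 1, by positivity, ?_⟩
  unfold HolderIso
  split_ifs with hle
  · have h0 : hfl β = 0 := by
      have : (hfl β : ℝ) < 1 := h1.trans_le hle
      exact_mod_cast Nat.lt_one_iff.mp (by exact_mod_cast this)
    simpa only [h0, taylorSum_zero] using hrem'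
  · exact ⟨hcd, fun x y => by simpa [taylorPolyMulti, taylorSum] using hrem' x y⟩

lemma volume_shell_le (hd : 1 ≤ d) {η : ℝ} (hη : 0 ≤ η) :
    volume (Metric.closedBall (0 : EVec d) 1 \ Metric.ball 0 (1 - η)) ≤
      ENNReal.ofReal (volume.real (Metric.ball (0 : EVec d) 1) * d * η) := by
  have : Nonempty (Fin d) := ⟨⟨0, hd⟩⟩
  have hd1 : (1 : ℝ) ≤ d := by exact_mod_cast hd
  have hV : 0 ≤ volume.real (Metric.ball (0 : EVec d) 1) := measureReal_nonneg
  have hfin : volume (Metric.closedBall (0 : EVec d) 1 \ Metric.ball 0 (1 - η)) ≠ ⊤ :=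
    measure_ne_top_of_subset Set.sdiff_subset measure_closedBall_lt_top.ne
  rw [← ENNReal.ofReal_toReal hfin]
  refine ENNReal.ofReal_le_ofReal ?_
  change volume.real _ ≤ _
  have hone : volume.real (Metric.closedBall (0 : EVec d) 1) =
      volume.real (Metric.ball (0 : EVec d) 1) := by
    simp [Measure.addHaar_real_closedBall]
  rcases le_or_gt 1 η with h | h
  · calc volume.real (Metric.closedBall (0 : EVec d) 1 \ Metric.ball 0 (1 - η))
        ≤ volume.real (Metric.closedBall (0 : EVec d) 1) :=
          measureReal_mono Set.sdiff_subset measure_closedBall_lt_top.ne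
      _ = volume.real (Metric.ball (0 : EVec d) 1) * 1 := by rw [hone, mul_one]
      _ ≤ volume.real (Metric.ball (0 : EVec d) 1) * (d * η) := by gcongr; nlinarith
      _ = _ := by ring
  · rw [measureReal_sdiff (Metric.ball_subset_closedBall.trans
      (Metric.closedBall_subset_closedBall (by linarith))) measurableSet_ball
      measure_closedBall_lt_top.ne, hone,
      measureReal_def volume (Metric.ball (0 : EVec d) (1 - η)),
      Measure.addHaar_ball volume (0 : EVec d) (by linarith : 0 ≤ 1 - η), ENNReal.toReal_mul,
      ENNReal.toReal_ofReal (pow_nonneg (by linarith) _), ← measureReal_def]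
    have hbern := one_add_mul_le_pow (show -2 ≤ -η by linarith) d
    rw [← sub_eq_add_neg] at hbern
    simp only [finrank_euclideanSpace, Fintype.card_fin]
    nlinarith

lemma marginCond_ballBump (hd : 1 ≤ d) {β γ a : ℝ} (hβ : 0 < β) (hγβ : γ * β ≤ 1)
    (ha : 0 < a) : ∃ κ2 : ℝ, 0 < κ2 ∧ MarginCond d γ 1 κ2 (fun x => ballBump β x * a) := by
  have hV : 0 < volume.real (Metric.ball (0 : EVec d) 1) :=
    ENNReal.toReal_pos (Metric.measure_ball_pos _ _ one_pos).ne' measure_ball_lt_top.ne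
  have hd0 : (0 : ℝ) < d := by exact_mod_cast hd
  refine ⟨volume.real (Metric.ball (0 : EVec d) 1) * d * (1 / a) ^ β⁻¹, by positivity, ?_⟩
  intro ε hε hε1
  have hη : 0 ≤ (ε / a) ^ β⁻¹ := by positivity
  have hsub : closure {x : EVec d | 0 < ballBump β x * a ∧ ballBump β x * a ≤ ε} ⊆
      Metric.closedBall (0 : EVec d) 1 \ Metric.ball 0 (1 - (ε / a) ^ β⁻¹) := by
    refine closure_minimal ?_ (Metric.isClosed_closedBall.sdiff Metric.isOpen_ball)
    rintro x ⟨hx0, hxε⟩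
    have hx1 : ‖x‖ < 1 := by
      by_contra! hge
      rw [ballBump_of_one_le_norm hβ hge, zero_mul] at hx0
      exact lt_irrefl _ hx0
    have hxn := norm_nonneg x
    have hq : 0 ≤ 1 - ‖x‖ ^ 2 := by nlinarith
    have hle : 1 - ‖x‖ ^ 2 ≤ (ε / a) ^ β⁻¹ := by
      rw [Real.le_rpow_inv_iff_of_pos hq (by positivity) hβ, le_div_iff₀ ha]
      simpa [ballBump, max_eq_left hq] using hxε
    refine ⟨by simpa using hx1.le, ?_⟩
    rw [Metric.mem_ball, dist_zero_right, not_lt]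
    nlinarith
  refine (measure_mono hsub).trans ((volume_shell_le hd hη).trans ?_)
  refine ENNReal.ofReal_le_ofReal ?_
  rw [mul_assoc _ ((1 / a) ^ β⁻¹), div_eq_mul_one_div ε a, mul_comm ε,
    Real.mul_rpow (by positivity) hε.le]
  gcongr _ * (_ * ?_)
  refine Real.rpow_le_rpow_of_exponent_ge hε hε1 ?_
  rwa [← one_div, le_div_iff₀ hβ]

lemma integral_ballBump_pos {β : ℝ} (hβ : 0 < β) : 0 < ∫ x : EVec d, ballBump β x := by
  refine (continuous_ballBump hβ.le).integral_pos_of_hasCompactSupport_nonneg_nonzero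
    (hasCompactSupport_ballBump hβ) (ballBump_nonneg β) (x := 0) ?_
  simp [ballBump]

theorem exists_density_of_mul_le_one (hd : 1 ≤ d) {β γ : ℝ} (hβ : 0 < β) (hγβ : γ * β ≤ 1) :
    ∃ (L κ1 κ2 : ℝ) (p : EVec d → ℝ), 0 < L ∧ 0 < κ1 ∧ 0 < κ2 ∧
      IsProbDensityE d p ∧ HolderIso d β L p ∧ HasCompactSupport p ∧
      MarginCond d γ κ1 κ2 p := by
  have hI := integral_ballBump_pos (d := d) hβ
  set a : ℝ := (∫ x : EVec d, ballBump β x)⁻¹ with ha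
  have ha0 : 0 < a := inv_pos.mpr hI
  obtain ⟨L, hL, hH⟩ := exists_holderIso_ballBump (d := d) hβ a
  obtain ⟨κ2, hκ2, hM⟩ := marginCond_ballBump hd hβ hγβ ha0
  refine ⟨L, 1, κ2, fun x => ballBump β x * a, hL, one_pos, hκ2, ⟨?_, ?_, ?_⟩, hH, ?_, hM⟩
  · exact ((continuous_ballBump hβ.le).mul continuous_const).measurable
  · exact fun x => mul_nonneg (ballBump_nonneg β x) ha0.le
  · rw [integral_mul_const, ha, mul_inv_cancel₀ hI.ne']
  · exact (hasCompactSupport_ballBump hβ).mul_right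

end Sufficiency

/-- Lemma 4.1.
For `β, γ > 0` there exist `L > 0`, `κ = (κ₁,κ₂) ∈ (0,∞)²` and a compactly supported
probability density in `𝒫^iso_d(β,L)` satisfying the `κ`-margin condition with exponent `γ`
if and only if `γβ ≤ 1`. -/
theorem statement4 (d : ℕ) (hd : 1 ≤ d) (β γ : ℝ) (hβ : 0 < β) (hγ : 0 < γ) :
    (∃ (L κ1 κ2 : ℝ) (p : EVec d → ℝ), 0 < L ∧ 0 < κ1 ∧ 0 < κ2 ∧
      IsProbDensityE d p ∧ HolderIso d β L p ∧ HasCompactSupport p ∧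
      MarginCond d γ κ1 κ2 p) ↔ γ * β ≤ 1 := by
  constructor
  · rintro ⟨L, κ1, κ2, p, hL, hκ1, hκ2, hp, hH, hc, hM⟩
    exact mul_le_one_of_marginCond hd hβ hL hκ1 hκ2 hp hH hc hM
  · exact exists_density_of_mul_le_one hd hβ
end

section
/- (Lemma 5.1(ii), lower variance bound.) Let 0 < β_i < ∞ for i = 1,…,d , L > 0, and let c₁₀ > 0 be any constant. Then there exists a constant c₁₁(β,L,c₁₀) > 0 such that for every p ∈ 𝒫_d(β,L), every t ∈ ℝ^d, and every bandwidth h = (h_1,…,h_d) with 0 < h_i ≤ c₁₀ p(t)^{1/β_i} for all i: c₁₁(β,L,c₁₀) p(t) / (n ∏_{i=1}^d h_i) ≤ n^{−1} ((K_h)² ∗ p)(t). -/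
open MeasureTheory Real
open scoped ENNReal BigOperators

noncomputable section

/-- `Vec d` is `ℝ^d` (with the product structure, used for anisotropic statements). -/
abbrev Vec (d : ℕ) := Fin d → ℝ

/-- Samples of size `n` from `ℝ^d`. -/
abbrev Sample (d n : ℕ) := Fin n → Vec d

/-- One-dimensional Taylor polynomial of `f` at `y'` of degree `l`, evaluated at `y`. -/
def taylorPoly (f : ℝ → ℝ) (l : ℕ) (y' y : ℝ) : ℝ :=
  ∑ k ∈ Finset.range (l + 1), iteratedDeriv k f y' / (Nat.factorial k : ℝ) * (y - y') ^ k

/-- The slice of `f : ℝ^d → ℝ` along coordinate `i` through the point `x`. -/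
def sliceFun {d : ℕ} (f : Vec d → ℝ) (i : Fin d) (x : Vec d) : ℝ → ℝ :=
  fun y => f (Function.update x i y)

/-- Anisotropic Hölder condition with exponents `β = (β_1, …, β_d)` and constant `L`:
in each coordinate `i`, the slices admit derivatives up to order `⌊β i⌋` (the largest
integer strictly less than `β i`) and the Taylor remainder of degree `⌊β i⌋` is bounded
by `L |y - y'| ^ (β i)`, uniformly in the remaining coordinates. For `β i ≤ 1` this is
the usual coordinatewise Hölder condition. -/
def HolderAniso (d : ℕ) (β : Vec d) (L : ℝ) (f : Vec d → ℝ) : Prop :=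
  ∀ i : Fin d,
    (∀ x : Vec d, ContDiff ℝ (hfl (β i)) (sliceFun f i x)) ∧
    ∀ (x : Vec d) (y y' : ℝ),
      |sliceFun f i x y - taylorPoly (sliceFun f i x) (hfl (β i)) y' y| ≤ L * |y - y'| ^ (β i)

/-- `p` is a probability density on `ℝ^d` (w.r.t. Lebesgue measure). -/
def IsProbDensity (d : ℕ) (p : Vec d → ℝ) : Prop :=
  Measurable p ∧ (∀ x, 0 ≤ p x) ∧ ∫ x, p x = 1

/-- The class `𝒫_d(β, L)` of anisotropic Hölder-smooth probability densities. -/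
def Pclass (d : ℕ) (β : Vec d) (L : ℝ) (p : Vec d → ℝ) : Prop :=
  IsProbDensity d p ∧ HolderAniso d β L p

/-- The unnormalized harmonic mean `β̄ = (∑ 1/β_i)⁻¹`. -/
def betaBar {d : ℕ} (β : Vec d) : ℝ := (∑ i, (β i)⁻¹)⁻¹

/-- `c₁(β, L) = sup { ‖p‖_∞ : p ∈ 𝒫_d(β, L) }`. -/
def c1const (d : ℕ) (β : Vec d) (L : ℝ) : ℝ :=
  sSup {c | ∃ p x, Pclass d β L p ∧ c = p x}

/-- The measure on `ℝ^d` with Lebesgue density `p`. -/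
def pdfMeasure (d : ℕ) (p : Vec d → ℝ) : Measure (Vec d) :=
  volume.withDensity fun x => ENNReal.ofReal (p x)

/-- The joint law `P^{⊗n}` of an i.i.d. sample of size `n` from the density `p`. -/
def jointMeasure (d n : ℕ) (p : Vec d → ℝ) : Measure (Sample d n) :=
  Measure.pi fun _ => pdfMeasure d p

/-- The `p`-dependent rate `ψ^n_{x,β} = min{ x, (x/n)^{β̄/(2β̄+1)} }` (with `bb = β̄`). -/
def psiRate (n : ℕ) (bb x : ℝ) : ℝ := min x ((x / n) ^ (bb / (2 * bb + 1)))

end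

noncomputable section

/-- `K` is a product kernel `K(x) = ∏ K_i(x_i)` whose factors are nonnegative, symmetric,
supported on `[-1,1]`, continuous on their support, integrate to one and are positive at `0`. -/
def IsProductKernel (d : ℕ) (K : Vec d → ℝ) : Prop :=
  ∃ Ki : Fin d → (ℝ → ℝ),
    (∀ x, K x = ∏ i, Ki i (x i)) ∧
    ∀ i : Fin d,
      (∀ y, 0 ≤ Ki i y) ∧ (∀ y, Ki i (-y) = Ki i y) ∧
      (∀ y, y ∉ Set.Icc (-1 : ℝ) 1 → Ki i y = 0) ∧
      ContinuousOn (Ki i) (Set.Icc (-1) 1) ∧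
      (∫ y, Ki i y = 1) ∧ 0 < Ki i 0

/-- The rescaled kernel `K_h(x) = (∏ h_i)⁻¹ K(x_1/h_1, …, x_d/h_d)`. -/
def scaledKernel (d : ℕ) (K : Vec d → ℝ) (h : Vec d) (x : Vec d) : ℝ :=
  (∏ i, h i)⁻¹ * K (fun i => x i / h i)

/-- The kernel density estimator `p̂_{n,h}(t) = n⁻¹ ∑_i K_h(t - X_i)`. -/
def kde (d n : ℕ) (K : Vec d → ℝ) (h : Vec d) (X : Sample d n) (t : Vec d) : ℝ :=
  (n : ℝ)⁻¹ * ∑ i, scaledKernel d K h (fun j => t j - X i j)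

/-- `‖K‖_sup`. -/
def KsupNorm (d : ℕ) (K : Vec d → ℝ) : ℝ := ⨆ x, |K x|

/-- `‖K‖₂² = ∫ K² dλ^d`. -/
def K2sq (d : ℕ) (K : Vec d → ℝ) : ℝ := ∫ x, (K x) ^ 2

/-- The exact variance proxy `σ_t²(h) = n⁻¹ ((K_h)² ∗ p)(t)`. -/
def sigmaSq (d n : ℕ) (K : Vec d → ℝ) (p : Vec d → ℝ) (h : Vec d) (t : Vec d) : ℝ :=
  (n : ℝ)⁻¹ * ∫ y, (scaledKernel d K h (fun i => t i - y i)) ^ 2 * p y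

/-- The truncation level `log²n / (n² ∏ h_i²)`. -/
def truncLevel (d n : ℕ) (h : Vec d) : ℝ :=
  (Real.log n) ^ 2 / ((n : ℝ) ^ 2 * (∏ i, h i) ^ 2)

/-- `σ²_{t,trunc}(h) = max{ log²n/(n² ∏ h_i²), σ_t²(h) }`. -/
def sigmaSqTrunc (d n : ℕ) (K : Vec d → ℝ) (p : Vec d → ℝ) (h : Vec d) (t : Vec d) : ℝ :=
  max (truncLevel d n h) (sigmaSq d n K p h t)

/-- The empirical variance `σ̃_t²(h) = (n² ∏ h_i²)⁻¹ ∑_i K²((t - X_i)/h)`. -/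
def sigmaTildeSq (d n : ℕ) (K : Vec d → ℝ) (h : Vec d) (X : Sample d n) (t : Vec d) : ℝ :=
  ((n : ℝ) ^ 2 * (∏ i, h i) ^ 2)⁻¹ * ∑ i, (K (fun j => (t j - X i j) / h j)) ^ 2

/-- `σ̃²_{t,trunc}(h) = max{ log²n/(n² ∏ h_i²), σ̃_t²(h) }`. -/
def sigmaTildeSqTrunc (d n : ℕ) (K : Vec d → ℝ) (h : Vec d) (X : Sample d n) (t : Vec d) : ℝ :=
  max (truncLevel d n h) (sigmaTildeSq d n K h X t)

/-- Membership of the multi-index `j` in the dyadic grid `𝒥`, i.e. `∑ j_i ≤ ⌊log₂(n/log²n)⌋`. -/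
def gridOK (d n : ℕ) (j : Fin d → ℕ) : Prop :=
  ((∑ i, j i : ℕ) : ℝ) ≤ Real.logb 2 ((n : ℝ) / (Real.log n) ^ 2)

/-- The bandwidth `(2^{-j_1}, …, 2^{-j_d})` associated with a multi-index `j`. -/
def bwOf (d : ℕ) (j : Fin d → ℕ) : Vec d := fun i => (2 : ℝ) ^ (-(j i : ℝ))

/-- The bias upper bound `B_t(h) = L ∑_i c_{9,i}(β) h_i^{β_i}`,
with `c_{9,i}(β) = ∫ |x_i|^{β_i} |K(x)| dλ^d(x)`. -/
def biasBound (d : ℕ) (K : Vec d → ℝ) (β : Vec d) (L : ℝ) (h : Vec d) : ℝ :=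
  L * ∑ i, (∫ x : Vec d, |x i| ^ (β i) * |K x|) * h i ^ (β i)

/-- The bias `b_t(h) = p(t) - (K_h ∗ p)(t)`. -/
def biasAt (d : ℕ) (K : Vec d → ℝ) (p : Vec d → ℝ) (h : Vec d) (t : Vec d) : ℝ :=
  p t - ∫ y, scaledKernel d K h (fun i => t i - y i) * p y

end

/-- The alternating binomial sum of order `N` kills the values at `0, u, …, N u` of a polynomial
of degree less than `N`. -/
lemma sum_choose_mul_polynomial_eq_zero (N : ℕ) (a : ℕ → ℝ) (u : ℝ) :
    ∑ k ∈ Finset.range (N + 1), ((-1 : ℝ) ^ (N - k) * (N.choose k : ℝ)) *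
      ∑ m ∈ Finset.range N, a m * ((k : ℝ) * u) ^ m = 0 := by
  have h := congrFun (fwdDiff_iter_sum_mul_pow_eq_zero (R := ℝ) (n := N) fun m => a m * u ^ m) 0
  rw [fwdDiff_iter_eq_sum_shift] at h
  refine Eq.trans ?_ h
  refine Finset.sum_congr rfl fun k _ => ?_
  simp only [zsmul_eq_mul]
  push_cast
  congr 1
  refine Finset.sum_congr rfl fun m _ => ?_
  simp [mul_pow]
  ring

/-- A polynomial of degree less than `N` is controlled at `0` by its values at `u, …, N u`. -/
lemma abs_coeff_zero_le_sum_choose (N : ℕ) (hN : 0 < N) (a : ℕ → ℝ) (u : ℝ) :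
    |a 0| ≤ ∑ k ∈ Finset.range N, (N.choose (k + 1) : ℝ) *
      |∑ m ∈ Finset.range N, a m * (((k + 1 : ℕ) : ℝ) * u) ^ m| := by
  have h := sum_choose_mul_polynomial_eq_zero N a u
  rw [Finset.sum_range_succ'] at h
  have h0 : ∑ m ∈ Finset.range N, a m * (((0 : ℕ) : ℝ) * u) ^ m = a 0 := by
    rw [Finset.sum_eq_single_of_mem 0 (Finset.mem_range.2 hN)]
    · simp
    · intro m _ hm
      simp [hm]
  rw [h0] at h
  have h1 : |a 0| = |(-1 : ℝ) ^ (N - 0) * (N.choose 0 : ℝ) * a 0| := by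
    simp [abs_mul]
  rw [h1, eq_neg_of_add_eq_zero_right h, abs_neg]
  refine (Finset.abs_sum_le_sum_abs _ _).trans (Finset.sum_le_sum fun k _ => le_of_eq ?_)
  simp [abs_mul]

/-- A nonnegative function with Taylor remainder of order `b` is controlled at `x` by its values
at the translates `x + u, …, x + N u`. -/
lemma le_sum_translates_of_taylor_remainder (b L : ℝ) (hL : 0 < L) (l : ℕ) :
    ∃ A : ℝ, 0 < A ∧ ∀ f : ℝ → ℝ, (∀ y, 0 ≤ f y) →
      (∀ y y' : ℝ, |f y - taylorPoly f l y' y| ≤ L * |y - y'| ^ b) → ∀ x u : ℝ,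
      f x ≤ A * (∑ k : Fin (l + 1), f (x + ((k : ℕ) + 1 : ℝ) * u) + |u| ^ b) := by
  refine ⟨2 ^ (l + 1) + ∑ k ∈ Finset.range (l + 1), ((l + 1).choose (k + 1) : ℝ) *
    (L * ((k + 1 : ℕ) : ℝ) ^ b), by positivity, ?_⟩
  intro f hf hT x u
  have h := abs_coeff_zero_le_sum_choose (l + 1) l.succ_pos
    (fun m => iteratedDeriv m f x / (m.factorial : ℝ)) u
  have hval : ∀ k : ℕ, |∑ m ∈ Finset.range (l + 1),
      iteratedDeriv m f x / (m.factorial : ℝ) * (((k + 1 : ℕ) : ℝ) * u) ^ m| ≤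
      f (x + ((k : ℝ) + 1) * u) + L * ((k + 1 : ℕ) : ℝ) ^ b * |u| ^ b := by
    intro k
    have h1 := hT (x + ((k : ℝ) + 1) * u) x
    have h2 : taylorPoly f l x (x + ((k : ℝ) + 1) * u) = ∑ m ∈ Finset.range (l + 1),
        iteratedDeriv m f x / (m.factorial : ℝ) * (((k + 1 : ℕ) : ℝ) * u) ^ m := by
      simp [taylorPoly]
    rw [← h2]
    have h3 : |x + ((k : ℝ) + 1) * u - x| ^ b = ((k + 1 : ℕ) : ℝ) ^ b * |u| ^ b := by
      rw [add_sub_cancel_left, abs_mul, ← Nat.cast_succ, Nat.abs_cast,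
        Real.mul_rpow (by positivity) (abs_nonneg _)]
    rw [h3, ← mul_assoc] at h1
    have h4 := abs_sub_abs_le_abs_sub (taylorPoly f l x (x + ((k : ℝ) + 1) * u))
      (f (x + ((k : ℝ) + 1) * u))
    rw [abs_sub_comm, abs_of_nonneg (hf (x + ((k : ℝ) + 1) * u))] at h4
    linarith
  have h0 : f x ≤ ∑ k ∈ Finset.range (l + 1), ((l + 1).choose (k + 1) : ℝ) *
      (f (x + ((k : ℝ) + 1) * u) + L * ((k + 1 : ℕ) : ℝ) ^ b * |u| ^ b) := by
    have : f x = |iteratedDeriv 0 f x / ((0 : ℕ).factorial : ℝ)| := by simp [abs_of_nonneg (hf x)]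
    rw [this]
    exact h.trans (Finset.sum_le_sum fun k _ =>
      mul_le_mul_of_nonneg_left (hval k) (Nat.cast_nonneg _))
  refine h0.trans ?_
  rw [Fin.sum_univ_eq_sum_range fun k : ℕ => f (x + ((k : ℝ) + 1) * u)]
  simp only [mul_add, Finset.sum_add_distrib, add_mul]
  have hu : 0 ≤ |u| ^ b := Real.rpow_nonneg (abs_nonneg u) b
  have h5 : ∑ k ∈ Finset.range (l + 1), ((l + 1).choose (k + 1) : ℝ) *
      f (x + ((k : ℝ) * u + 1 * u)) ≤
      2 ^ (l + 1) * ∑ k ∈ Finset.range (l + 1), f (x + ((k : ℝ) * u + 1 * u)) := by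
    rw [Finset.mul_sum]
    refine Finset.sum_le_sum fun k _ => mul_le_mul_of_nonneg_right ?_ (hf _)
    exact_mod_cast Nat.choose_le_two_pow (l + 1) (k + 1)
  have h6 : ∑ k ∈ Finset.range (l + 1), ((l + 1).choose (k + 1) : ℝ) *
      (L * ((k + 1 : ℕ) : ℝ) ^ b * |u| ^ b) = (∑ k ∈ Finset.range (l + 1),
        ((l + 1).choose (k + 1) : ℝ) * (L * ((k + 1 : ℕ) : ℝ) ^ b)) * |u| ^ b := by
    rw [Finset.sum_mul]
    exact Finset.sum_congr rfl fun k _ => by ring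
  rw [h6]
  have h7 : 0 ≤ (∑ k ∈ Finset.range (l + 1), ((l + 1).choose (k + 1) : ℝ) *
    (L * ((k + 1 : ℕ) : ℝ) ^ b)) * ∑ k ∈ Finset.range (l + 1), f (x + ((k : ℝ) * u + 1 * u)) :=
    mul_nonneg (Finset.sum_nonneg fun k _ => by positivity) (Finset.sum_nonneg fun k _ => hf _)
  have h8 : 0 ≤ (2 : ℝ) ^ (l + 1) * |u| ^ b := by positivity
  linarith

/-- Iterating the one-dimensional bound over the coordinates in `S`. -/
lemma le_sum_translates_of_holderAniso_finset {d : ℕ} (β : Vec d) (L : ℝ) (hL : 0 < L)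
    (S : Finset (Fin d)) :
    ∃ (C : ℝ) (ι : Type) (_ : Fintype ι) (D : ι → Vec d), 0 < C ∧
      (∀ k, ∀ i ∈ S, 1 ≤ D k i) ∧ (∀ k, ∀ i ∉ S, D k i = 0) ∧
      ∀ p : Vec d → ℝ, (∀ x, 0 ≤ p x) → HolderAniso d β L p → ∀ x u : Vec d,
        p x ≤ C * (∑ k, p (x + D k * u) + ∑ i ∈ S, |u i| ^ β i) := by
  induction S using Finset.induction_on with
  | empty =>
    refine ⟨1, Unit, inferInstance, fun _ => 0, one_pos, by simp, by simp, ?_⟩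
    intro p _ _ x u
    simp
  | insert i S hi ih =>
    obtain ⟨C, ι, _, D, hC, hD1, hD0, hp⟩ := ih
    obtain ⟨A, hA, hf⟩ := le_sum_translates_of_taylor_remainder (β i) L hL (hfl (β i))
    set M : ℝ := A * (1 + Fintype.card ι) with hM
    refine ⟨C * (1 + M), ι × Fin (hfl (β i) + 1), inferInstance,
      fun k => Function.update (D k.1) i ((k.2 : ℕ) + 1), by positivity, ?_, ?_, ?_⟩
    · intro k j hj
      by_cases hji : j = i
      · subst hji; simp
      · simpa [hji] using hD1 k.1 j (by simpa [hji] using hj)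
    · intro k j hj
      have hj' : j ≠ i ∧ j ∉ S := by simpa using hj
      simpa [hj'.1] using hD0 k.1 j hj'.2
    · intro p hp0 hpH x u
      rw [Fintype.sum_prod_type, Finset.sum_insert hi]
      have key : ∀ k : ι, p (x + D k * u) ≤ A * (∑ m : Fin (hfl (β i) + 1),
          p (x + Function.update (D k) i ((m : ℕ) + 1) * u) + |u i| ^ β i) := by
        intro k
        have h1 := hf (sliceFun p i (x + D k * u)) (fun y => hp0 _)
          ((hpH i).2 (x + D k * u)) ((x + D k * u) i) (u i)
        simp only [sliceFun, Function.update_eq_self] at h1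
        convert h1 using 6 with m
        funext j
        by_cases hj : j = i
        · subst hj; simp [hD0 k j hi]
        · simp [hj]
      set T : ℝ := ∑ k : ι, ∑ m : Fin (hfl (β i) + 1),
        p (x + Function.update (D k) i ((m : ℕ) + 1) * u) with hTdef
      have hT : 0 ≤ T := Finset.sum_nonneg fun k _ => Finset.sum_nonneg fun m _ => hp0 _
      have hsum : ∑ k, p (x + D k * u) ≤ A * (T + Fintype.card ι * |u i| ^ β i) := by
        refine (Finset.sum_le_sum fun k _ => key k).trans (le_of_eq ?_)
        rw [← Finset.mul_sum, Finset.sum_add_distrib]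
        simp [hTdef]
      have hu : 0 ≤ |u i| ^ β i := Real.rpow_nonneg (abs_nonneg _) _
      have hS : 0 ≤ ∑ j ∈ S, |u j| ^ β j :=
        Finset.sum_nonneg fun j _ => Real.rpow_nonneg (abs_nonneg _) _
      refine (hp p hp0 hpH x u).trans ?_
      rw [mul_assoc]
      refine mul_le_mul_of_nonneg_left ?_ hC.le
      have hc : (0 : ℝ) ≤ Fintype.card ι := Nat.cast_nonneg _
      have e1 : 0 ≤ A * Fintype.card ι * T := by positivity
      have e2 : 0 ≤ M * ∑ j ∈ S, |u j| ^ β j := by positivity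
      have e3 : 0 ≤ A * |u i| ^ β i := by positivity
      rw [hM] at e2 ⊢
      nlinarith

/-- A nonnegative anisotropic Hölder function is controlled at `x` by its values at finitely many
points `x + D k * u`, where each `D k` is a diagonal dilation. -/
lemma le_sum_translates_of_holderAniso {d : ℕ} (β : Vec d) (L : ℝ) (hL : 0 < L) :
    ∃ (C N : ℝ) (ι : Type) (_ : Fintype ι) (D : ι → Vec d), 0 < C ∧ 1 ≤ N ∧
      (∀ k i, 1 ≤ D k i) ∧ (∀ k i, D k i ≤ N) ∧
      ∀ p : Vec d → ℝ, (∀ x, 0 ≤ p x) → HolderAniso d β L p → ∀ x u : Vec d,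
        p x ≤ C * (∑ k, p (x + D k * u) + ∑ i, |u i| ^ β i) := by
  obtain ⟨C, ι, hι, D, hC, hD1, -, hp⟩ :=
    le_sum_translates_of_holderAniso_finset β L hL Finset.univ
  obtain ⟨N, hN⟩ := Finite.bddAbove_range fun q : ι × Fin d => D q.1 q.2
  exact ⟨C, max N 1, ι, hι, D, hC, le_max_right _ _, fun k i => hD1 k i (Finset.mem_univ i),
    fun k i => (hN ⟨(k, i), rfl⟩).trans (le_max_left _ _), hp⟩

/-- Dilating the argument coordinatewise by factors at least one decreases the integral. -/
lemma lintegral_comp_mul_le_of_one_le {d : ℕ} (D : Vec d) (hD : ∀ i, 1 ≤ D i)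
    (g : Vec d → ℝ≥0∞) (hg : Measurable g) : ∫⁻ u, g (D * u) ≤ ∫⁻ v, g v := by
  have hdet : (Matrix.diagonal D).det = ∏ i, D i := Matrix.det_diagonal
  have h1 : 1 ≤ ∏ i, D i :=
    Finset.prod_induction D (1 ≤ ·) (fun _ _ => one_le_mul_of_one_le_of_one_le) le_rfl
      fun i _ => hD i
  have hne : (Matrix.diagonal D).det ≠ 0 := by rw [hdet]; positivity
  conv_rhs => rw [← Real.smul_map_diagonal_volume_pi hne]
  rw [lintegral_smul_measure, lintegral_map hg (LinearMap.continuous_on_pi _).measurable, hdet]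
  have h2 : ∀ u : Vec d, Matrix.toLin' (Matrix.diagonal D) u = D * u := fun u => by
    ext i
    simp [Matrix.mulVec_diagonal]
  simp only [h2]
  have h3 : 1 ≤ ENNReal.ofReal |∏ i, D i| := by
    rw [ENNReal.one_le_ofReal]
    exact h1.trans (le_abs_self _)
  exact le_mul_of_one_le_left' h3

/-- Lower bound for the mass a Hölder density puts on a small box with corner `x`. -/
lemma mul_prod_le_lintegral_box {d : ℕ} (β : Vec d) (hβ : ∀ i, 0 < β i) (L : ℝ) (hL : 0 < L) :
    ∃ C c : ℝ, 0 < C ∧ 0 < c ∧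
      ∀ p : Vec d → ℝ, Measurable p → (∀ x, 0 ≤ p x) → HolderAniso d β L p →
      ∀ x ρ : Vec d, (∀ i, 0 < ρ i) → C * ∑ i, ρ i ^ β i ≤ p x / 2 →
        ENNReal.ofReal (c * p x * ∏ i, ρ i) ≤
          ∫⁻ v in Set.Icc 0 ρ, ENNReal.ofReal (p (x + v)) := by
  obtain ⟨C, N, ι, _, D, hC, hN, hD1, hDN, hp⟩ := le_sum_translates_of_holderAniso β L hL
  set W : ℝ := C * Fintype.card ι + 1 with hWdef
  have hW : 0 < W := by positivity
  have hN0 : 0 < N := one_pos.trans_le hN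
  refine ⟨C, (2 * W * N ^ d)⁻¹, hC, by positivity, ?_⟩
  intro p hpm hp0 hpH x ρ hρ hsmall
  set g : Vec d → ℝ≥0∞ := (Set.Icc 0 ρ).indicator fun v => ENNReal.ofReal (p (x + v)) with hg
  have hgm : Measurable g :=
    (hpm.comp (measurable_const_add x)).ennreal_ofReal.indicator measurableSet_Icc
  rw [← lintegral_indicator measurableSet_Icc, ← hg]
  set B : Set (Vec d) := Set.Icc 0 fun i => ρ i / N with hB
  have hpt : ∀ u ∈ B, ENNReal.ofReal (p x / 2) ≤ ENNReal.ofReal C * ∑ k, g (D k * u) := by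
    intro u hu
    have hu0 : ∀ i, 0 ≤ u i := hu.1
    have hu1 : ∀ i, u i ≤ ρ i / N := hu.2
    have hmem : ∀ k, D k * u ∈ Set.Icc 0 ρ := by
      refine fun k => ⟨fun i => mul_nonneg (zero_le_one.trans (hD1 k i)) (hu0 i), fun i => ?_⟩
      calc D k i * u i ≤ N * (ρ i / N) := mul_le_mul (hDN k i) (hu1 i) (hu0 i) hN0.le
        _ = ρ i := by field_simp
    have hgk : ∀ k, g (D k * u) = ENNReal.ofReal (p (x + D k * u)) := fun k =>
      Set.indicator_of_mem (hmem k) _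
    simp only [hgk]
    rw [← ENNReal.ofReal_sum_of_nonneg fun k _ => hp0 _, ← ENNReal.ofReal_mul hC.le]
    refine ENNReal.ofReal_le_ofReal ?_
    have h1 := hp p hp0 hpH x u
    have h2 : ∑ i, |u i| ^ β i ≤ ∑ i, ρ i ^ β i := by
      refine Finset.sum_le_sum fun i _ => Real.rpow_le_rpow (abs_nonneg _) ?_ (hβ i).le
      rw [abs_of_nonneg (hu0 i)]
      exact (hu1 i).trans (div_le_self (hρ i).le hN)
    have h3 := mul_le_mul_of_nonneg_left h2 hC.le
    rw [mul_add] at h1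
    linarith
  have hvol : volume B = ENNReal.ofReal (∏ i, ρ i / N) := by
    rw [hB, Real.volume_Icc_pi, ENNReal.ofReal_prod_of_nonneg]
    · simp
    · exact fun i _ => (div_pos (hρ i) hN0).le
  have hint : ENNReal.ofReal (p x / 2) * volume B ≤ ENNReal.ofReal W * ∫⁻ v, g v := by
    calc ENNReal.ofReal (p x / 2) * volume B
        = ∫⁻ _ in B, ENNReal.ofReal (p x / 2) := by rw [setLIntegral_const]
      _ ≤ ∫⁻ u in B, ENNReal.ofReal C * ∑ k, g (D k * u) :=
        setLIntegral_mono' measurableSet_Icc hpt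
      _ ≤ ∫⁻ u, ENNReal.ofReal C * ∑ k, g (D k * u) := setLIntegral_le_lintegral _ _
      _ = ENNReal.ofReal C * ∑ k, ∫⁻ u, g (D k * u) := by
        have hgk : ∀ k, Measurable fun u => g (D k * u) := fun k =>
          hgm.comp (measurable_const_mul (D k))
        rw [lintegral_const_mul _ (Finset.measurable_fun_sum _ fun k _ => hgk k),
          lintegral_finsetSum _ fun k _ => hgk k]
      _ ≤ ENNReal.ofReal C * ∑ _k : ι, ∫⁻ v, g v :=
        mul_le_mul_right (Finset.sum_le_sum fun k _ =>
          lintegral_comp_mul_le_of_one_le (D k) (hD1 k) g hgm) _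
      _ = ENNReal.ofReal (C * Fintype.card ι) * ∫⁻ v, g v := by
        rw [Finset.sum_const, nsmul_eq_mul, ENNReal.ofReal_mul hC.le, ENNReal.ofReal_natCast,
          mul_assoc, Finset.card_univ]
      _ ≤ ENNReal.ofReal W * ∫⁻ v, g v := by
        gcongr
        linarith
  rw [← ENNReal.mul_le_mul_iff_right (a := ENNReal.ofReal W) (by simpa using hW)
    ENNReal.ofReal_ne_top]
  refine le_trans (le_of_eq ?_) hint
  rw [hvol, ← ENNReal.ofReal_mul hW.le, ← ENNReal.ofReal_mul (by linarith [hp0 x]),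
    Finset.prod_div_distrib]
  congr 1
  simp only [Finset.prod_const, Finset.card_univ, Fintype.card_fin]
  field_simp

/-- A function that is continuous on `[-1, 1]` and vanishes outside is measurable. -/
lemma measurable_of_continuousOn_Icc_of_eq_zero {f : ℝ → ℝ}
    (hf : ContinuousOn f (Set.Icc (-1) 1)) (h0 : ∀ y, y ∉ Set.Icc (-1 : ℝ) 1 → f y = 0) :
    Measurable f := by
  classical
  have h : f = (Set.Icc (-1 : ℝ) 1).piecewise f 0 := by
    funext y
    by_cases hy : y ∈ Set.Icc (-1 : ℝ) 1
    · simp [hy]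
    · rw [Set.piecewise_eq_of_notMem _ _ _ hy, h0 y hy, Pi.zero_apply]
  rw [h]
  exact hf.measurable_piecewise continuousOn_const measurableSet_Icc

/-- A product kernel is nonnegative, measurable and bounded. -/
lemma IsProductKernel.nonneg_measurable_bounded {d : ℕ} {K : Vec d → ℝ}
    (hK : IsProductKernel d K) :
    (∀ x, 0 ≤ K x) ∧ Measurable K ∧ ∃ M, ∀ x, K x ≤ M := by
  obtain ⟨Ki, hKi, h⟩ := hK
  have hbd : ∀ i, ∃ M : ℝ, 0 ≤ M ∧ ∀ y, Ki i y ≤ M := by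
    intro i
    obtain ⟨M, hM⟩ := isCompact_Icc.bddAbove_image (h i).2.2.2.1
    refine ⟨max M 0, le_max_right _ _, fun y => ?_⟩
    by_cases hy : y ∈ Set.Icc (-1 : ℝ) 1
    · exact (hM ⟨y, hy, rfl⟩).trans (le_max_left _ _)
    · rw [(h i).2.2.1 y hy]
      exact le_max_right _ _
  choose M hM0 hM using hbd
  refine ⟨fun x => ?_, ?_, ∏ i, M i, fun x => ?_⟩
  · rw [hKi]
    exact Finset.prod_nonneg fun i _ => (h i).1 _
  · rw [funext hKi]
    exact Finset.measurable_fun_prod _ fun i _ =>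
      (measurable_of_continuousOn_Icc_of_eq_zero (h i).2.2.2.1 (h i).2.2.1).comp
        (measurable_pi_apply i)
  · rw [hKi]
    exact Finset.prod_le_prod (fun i _ => (h i).1 _) fun i _ => hM i _

/-- A product kernel is bounded away from zero near the origin. -/
lemma IsProductKernel.exists_pos_le_near_zero {d : ℕ} {K : Vec d → ℝ}
    (hK : IsProductKernel d K) :
    ∃ κ > 0, ∀ᶠ η in nhdsWithin (0 : ℝ) (Set.Ioi 0), ∀ x : Vec d, (∀ i, |x i| ≤ η) → κ ≤ K x := by
  obtain ⟨Ki, hKi, h⟩ := hK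
  refine ⟨∏ i, Ki i 0 / 2, Finset.prod_pos fun i _ => half_pos (h i).2.2.2.2.2, ?_⟩
  have hev : ∀ᶠ η in nhdsWithin (0 : ℝ) (Set.Ioi 0), ∀ i, ∀ y, |y| ≤ η → Ki i 0 / 2 ≤ Ki i y := by
    rw [Filter.eventually_all]
    intro i
    have hpos := (h i).2.2.2.2.2
    have hcont : ContinuousAt (Ki i) 0 :=
      (h i).2.2.2.1.continuousAt (Icc_mem_nhds (by norm_num) (by norm_num))
    obtain ⟨ε, hε, hball⟩ := Metric.eventually_nhds_iff.1
      (hcont.eventually (lt_mem_nhds (half_lt_self hpos)))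
    filter_upwards [mem_nhdsWithin_of_mem_nhds (gt_mem_nhds hε)] with η hη y hy
    exact (hball (by simpa using hy.trans_lt hη)).le
  filter_upwards [hev] with η hη x hx
  rw [hKi]
  exact Finset.prod_le_prod (fun i _ => (half_pos (h i).2.2.2.2.2).le) fun i _ => hη i _ (hx i)

/-- For small `η`, the Hölder bias at bandwidths `η c` is small. -/
lemma eventually_mul_sum_rpow_le_half {d : ℕ} (β : Vec d) (hβ : ∀ i, 0 < β i) (C c : ℝ) :
    ∀ᶠ η in nhdsWithin (0 : ℝ) (Set.Ioi 0), C * ∑ i, (η * c) ^ β i ≤ 1 / 2 := by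
  have hcont : ContinuousAt (fun η : ℝ => C * ∑ i, (η * c) ^ β i) 0 := by
    refine continuousAt_const.mul (tendsto_finsetSum _ fun i _ => ?_)
    exact (continuousAt_id.mul continuousAt_const).rpow_const (Or.inr (hβ i).le)
  have h0 : C * ∑ i, ((0 : ℝ) * c) ^ β i < 1 / 2 := by
    simp [fun i => Real.zero_rpow (hβ i).ne']
  exact mem_nhdsWithin_of_mem_nhds ((hcont.eventually (gt_mem_nhds h0)).mono fun _ h => h.le)

/-- Lemma 5.1(ii), lower variance bound.
For any `β` with `0 < β_i < ∞`, `L > 0` and any `c₁₀ > 0` there is `c₁₁(β,L,c₁₀) > 0` such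
that for every `p ∈ 𝒫_d(β,L)`, every `t`, every `n` and every bandwidth with
`0 < h_i ≤ c₁₀ p(t)^{1/β_i}`: `c₁₁ p(t)/(n ∏ h_i) ≤ n⁻¹((K_h)² ∗ p)(t)`. -/
theorem statement8 (d : ℕ) (hd : 1 ≤ d) (K : Vec d → ℝ) (hK : IsProductKernel d K)
    (β : Vec d) (hβ : ∀ i, 0 < β i) (L : ℝ) (hL : 0 < L) (c10 : ℝ) (hc10 : 0 < c10) :
    ∃ c11 : ℝ, 0 < c11 ∧
      ∀ p : Vec d → ℝ, Pclass d β L p → ∀ t : Vec d, ∀ n : ℕ, ∀ h : Vec d,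
        (∀ i, 0 < h i ∧ h i ≤ c10 * p t ^ (β i)⁻¹) →
        c11 * p t / (n * ∏ i, h i) ≤ sigmaSq d n K p h t := by
  obtain ⟨C, c, hC, hc, hbox⟩ := mul_prod_le_lintegral_box β hβ L hL
  obtain ⟨hK0, hKm, M, hKM⟩ := hK.nonneg_measurable_bounded
  obtain ⟨κ, hκ, hev⟩ := hK.exists_pos_le_near_zero
  obtain ⟨η, ⟨hKη, hbias⟩, hη⟩ := ((hev.and (eventually_mul_sum_rpow_le_half β hβ C c10)).and
    self_mem_nhdsWithin).exists
  refine ⟨κ ^ 2 * (c * η ^ d), by positivity, ?_⟩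
  rintro p ⟨⟨hpm, hp0, hpint⟩, hpH⟩ t n h hh
  have hprod : 0 < ∏ i, h i := Finset.prod_pos fun i _ => (hh i).1
  have hsmall : C * ∑ i, (η * h i) ^ β i ≤ p t / 2 := by
    have hi : ∀ i, (η * h i) ^ β i ≤ (η * c10) ^ β i * p t := by
      intro i
      calc (η * h i) ^ β i ≤ (η * c10 * p t ^ (β i)⁻¹) ^ β i := by
            refine Real.rpow_le_rpow (mul_pos hη (hh i).1).le ?_ (hβ i).le
            rw [mul_assoc]
            exact mul_le_mul_of_nonneg_left (hh i).2 hη.le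
        _ = (η * c10) ^ β i * p t := by
            rw [Real.mul_rpow (by positivity) (Real.rpow_nonneg (hp0 t) _),
              Real.rpow_inv_rpow (hp0 t) (hβ i).ne']
    calc C * ∑ i, (η * h i) ^ β i ≤ C * ∑ i, (η * c10) ^ β i * p t :=
          mul_le_mul_of_nonneg_left (Finset.sum_le_sum fun i _ => hi i) hC.le
      _ = (C * ∑ i, (η * c10) ^ β i) * p t := by rw [← Finset.sum_mul, mul_assoc]
      _ ≤ 1 / 2 * p t := mul_le_mul_of_nonneg_right hbias (hp0 t)
      _ = p t / 2 := by ring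
  have hmass := hbox p hpm hp0 hpH t (fun i => η * h i) (fun i => mul_pos hη (hh i).1) hsmall
  set F : Vec d → ℝ := fun y => (scaledKernel d K h (fun i => t i - y i)) ^ 2 * p y with hF
  have hF0 : ∀ y, 0 ≤ F y := fun y => mul_nonneg (sq_nonneg _) (hp0 y)
  have hFint : Integrable F := by
    have hpI : Integrable p := by
      by_contra hcon
      rw [integral_undef hcon] at hpint
      exact zero_ne_one hpint
    have hSm : Measurable fun y : Vec d => scaledKernel d K h (fun i => t i - y i) := by
      unfold scaledKernel
      refine (hKm.comp (measurable_pi_lambda _ fun i => ?_)).const_mul _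
      fun_prop
    refine hpI.bdd_mul (c := ((∏ i, h i)⁻¹ * M) ^ 2) (hSm.pow_const 2).aestronglyMeasurable ?_
    refine Filter.Eventually.of_forall fun y => ?_
    rw [Real.norm_of_nonneg (sq_nonneg _)]
    refine pow_le_pow_left₀ (mul_nonneg (inv_nonneg.2 hprod.le) (hK0 _)) ?_ 2
    exact mul_le_mul_of_nonneg_left (hKM _) (inv_nonneg.2 hprod.le)
  have hlow : ∀ v ∈ Set.Icc (0 : Vec d) (fun i => η * h i),
      ((∏ i, h i)⁻¹ * κ) ^ 2 * p (t + v) ≤ F (t + v) := by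
    intro v hv
    refine mul_le_mul_of_nonneg_right ?_ (hp0 _)
    refine pow_le_pow_left₀ (by positivity) ?_ 2
    refine mul_le_mul_of_nonneg_left (hKη _ fun i => ?_) (inv_nonneg.2 hprod.le)
    have hv0 : 0 ≤ v i := hv.1 i
    have hv1 : v i ≤ η * h i := hv.2 i
    change |(t i - (t i + v i)) / h i| ≤ η
    rw [sub_add_cancel_left, abs_div, abs_neg, abs_of_nonneg hv0,
      abs_of_pos (hh i).1]
    exact (div_le_iff₀ (hh i).1).2 hv1
  have hmain : ((∏ i, h i)⁻¹ * κ) ^ 2 * (c * p t * ∏ i, η * h i) ≤ ∫ y, F y := by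
    rw [← ENNReal.ofReal_le_ofReal_iff (integral_nonneg hF0),
      ofReal_integral_eq_lintegral_ofReal hFint (Filter.Eventually.of_forall hF0),
      ENNReal.ofReal_mul (sq_nonneg _)]
    calc ENNReal.ofReal (((∏ i, h i)⁻¹ * κ) ^ 2) * ENNReal.ofReal (c * p t * ∏ i, η * h i)
        ≤ ENNReal.ofReal (((∏ i, h i)⁻¹ * κ) ^ 2) *
          ∫⁻ v in Set.Icc 0 (fun i => η * h i), ENNReal.ofReal (p (t + v)) := by gcongr
      _ = ∫⁻ v in Set.Icc 0 (fun i => η * h i),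
          ENNReal.ofReal (((∏ i, h i)⁻¹ * κ) ^ 2 * p (t + v)) := by
        have hpt : Measurable fun v => ENNReal.ofReal (p (t + v)) :=
          (hpm.comp (measurable_const_add t)).ennreal_ofReal
        rw [← lintegral_const_mul _ hpt]
        exact lintegral_congr fun v => (ENNReal.ofReal_mul (sq_nonneg _)).symm
      _ ≤ ∫⁻ v in Set.Icc 0 (fun i => η * h i), ENNReal.ofReal (F (t + v)) :=
        setLIntegral_mono' measurableSet_Icc fun v hv => ENNReal.ofReal_le_ofReal (hlow v hv)
      _ ≤ ∫⁻ v, ENNReal.ofReal (F (t + v)) := setLIntegral_le_lintegral _ _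
      _ = ∫⁻ y, ENNReal.ofReal (F y) :=
        lintegral_add_left_eq_self (fun y => ENNReal.ofReal (F y)) t
  rw [sigmaSq, ← hF]
  refine le_trans (le_of_eq ?_) (mul_le_mul_of_nonneg_left hmain (by positivity))
  rw [Finset.prod_mul_distrib, Finset.prod_const, Finset.card_univ, Fintype.card_fin]
  rw [div_eq_mul_inv, mul_inv]
  field_simp
end

section
/- (Lemma 5.2, ordering of truncated variances.) Let 0 < β_i ≤ 2 for i = 1,…,d, L > 0. There exists a constant c₁₂(β,L) > 0 such that for every p ∈ 𝒫_d(β,L), every t ∈ ℝ^d and all (nonrandom) multi-indices j = (j_1,…,j_d) and m = (m_1,…,m_d) with j ≥ j̄ componentwise: σ²_{t,trunc}(j ∧ m) ≤ c₁₂(β,L) max{ σ²_{t,trunc}(j), σ²_{t,trunc}(m) }. If additionally m ≥ j componentwise, then σ²_{t,trunc}(j) ≤ c₁₂(β,L) σ²_{t,trunc}(m). -/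
open MeasureTheory Real
open scoped ENNReal BigOperators

noncomputable section
/-- The constant `c₈(β,L) = min_i ( 2dL ∫ |x_i|^{β_i} K²(x) dλ^d(x) / ‖K‖₂² )^{-1/β_i}`. -/
def c8const (d : ℕ) (K : Vec d → ℝ) (β : Vec d) (L : ℝ) : ℝ :=
  ⨅ i : Fin d,
    (2 * d * L * (∫ x : Vec d, |x i| ^ (β i) * (K x) ^ 2) / K2sq d K) ^ (-(β i)⁻¹)

/-- The reference (optimal adaptive) bandwidth `h̄` of (5.2), as a function of `p(t)`:
`h̄_i = c₈(β,L) max{ (log n/n)^{(β̄/(β̄+1))(1/β_i)}, (p(t) log n/n)^{(β̄/(2β̄+1))(1/β_i)} }`. -/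
def hbar (d : ℕ) (K : Vec d → ℝ) (β : Vec d) (L : ℝ) (n : ℕ) (pt : ℝ) : Vec d :=
  fun i => c8const d K β L *
    max ((Real.log n / n) ^ ((betaBar β / (betaBar β + 1)) * (β i)⁻¹))
        ((pt * Real.log n / n) ^ ((betaBar β / (2 * betaBar β + 1)) * (β i)⁻¹))

/-- The dyadic approximation `j̄_i = ⌊log₂(1/h̄_i)⌋ + 1` of the reference bandwidth. -/
def jbar (d : ℕ) (K : Vec d → ℝ) (β : Vec d) (L : ℝ) (n : ℕ) (pt : ℝ) : Fin d → ℤ :=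
  fun i => ⌊Real.logb 2 (1 / hbar d K β L n pt i)⌋ + 1

/-- The bandwidth `(2^{-j_1}, …, 2^{-j_d})` associated with an integer multi-index. -/
def bwOfZ (d : ℕ) (j : Fin d → ℤ) : Vec d := fun i => (2 : ℝ) ^ (-(j i : ℝ))
end

section ProductKernel

variable {d : ℕ} {K : Vec d → ℝ}

lemma IsProductKernel.measurable (hK : IsProductKernel d K) : Measurable K := by
  obtain ⟨Ki, hKi, hp⟩ := hK
  have hm : ∀ i, Measurable (Ki i) := by
    intro i
    classical
    have h := ContinuousOn.measurable_piecewise (hp i).2.2.2.1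
      (continuousOn_const (c := (0 : ℝ)) (s := (Set.Icc (-1 : ℝ) 1)ᶜ)) measurableSet_Icc
    convert h using 1
    ext y
    by_cases hy : y ∈ Set.Icc (-1 : ℝ) 1
    · rw [Set.piecewise_eq_of_mem _ _ _ hy]
    · rw [Set.piecewise_eq_of_notMem _ _ _ hy, (hp i).2.2.1 y hy]
  rw [funext hKi]
  exact Finset.measurable_prod _ fun i _ => (hm i).comp (measurable_pi_apply i)

lemma IsProductKernel.eq_zero (hK : IsProductKernel d K) {x : Vec d}
    (hx : x ∉ Set.Icc (-1 : Vec d) 1) : K x = 0 := by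
  obtain ⟨Ki, hKi, hp⟩ := hK
  have : ∃ i, x i ∉ Set.Icc (-1 : ℝ) 1 := by
    by_contra! h
    exact hx ⟨fun i => (h i).1, fun i => (h i).2⟩
  obtain ⟨i, hi⟩ := this
  rw [hKi]
  exact Finset.prod_eq_zero (Finset.mem_univ i) ((hp i).2.2.1 _ hi)

lemma IsProductKernel.exists_bound (hK : IsProductKernel d K) : ∃ C, ∀ x, |K x| ≤ C := by
  obtain ⟨Ki, hKi, hp⟩ := hK
  have hb : ∀ i, ∃ C, ∀ y, |Ki i y| ≤ C := by
    intro i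
    obtain ⟨C, hC⟩ := isCompact_Icc.exists_bound_of_continuousOn (hp i).2.2.2.1
    refine ⟨max C 0, fun y => ?_⟩
    by_cases hy : y ∈ Set.Icc (-1 : ℝ) 1
    · exact (hC y hy).trans (le_max_left _ _)
    · simp [(hp i).2.2.1 y hy]
  choose C hC using hb
  refine ⟨∏ i, C i, fun x => ?_⟩
  rw [hKi, Finset.abs_prod]
  exact Finset.prod_le_prod (fun _ _ => abs_nonneg _) fun i _ => hC i _

lemma IsProductKernel.update_neg (hK : IsProductKernel d K) (x : Vec d) (i : Fin d) :
    K (Function.update x i (-x i)) = K x := by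
  obtain ⟨Ki, hKi, hp⟩ := hK
  rw [hKi, hKi]
  refine Finset.prod_congr rfl fun k _ => ?_
  rcases eq_or_ne k i with rfl | h
  · simp [(hp k).2.1]
  · simp [h]

lemma IsProductKernel.eventually_pos (hK : IsProductKernel d K) :
    ∀ᶠ x in nhds (0 : Vec d), 0 < K x := by
  obtain ⟨Ki, hKi, hp⟩ := hK
  have hc : ContinuousAt K 0 := by
    rw [funext hKi]
    refine tendsto_finsetProd _ fun i _ => ?_
    have h0 : ContinuousAt (Ki i) ((0 : Vec d) i) :=
      (hp i).2.2.2.1.continuousAt (Icc_mem_nhds (by simp) (by simp))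
    exact h0.comp (f := fun x : Vec d => x i) (continuous_apply i).continuousAt
  refine hc.eventually (lt_mem_nhds ?_)
  rw [hKi]
  exact Finset.prod_pos fun i _ => (hp i).2.2.2.2.2

/-- A measurable function that is bounded on the unit box is integrable against `K²`. -/
lemma IsProductKernel.integrable_sq_mul (hK : IsProductKernel d K) {g : Vec d → ℝ}
    (hg : Measurable g) {B : ℝ} (hB : ∀ x ∈ Set.Icc (-1 : Vec d) 1, |g x| ≤ B) :
    Integrable fun x => K x ^ 2 * g x := by
  obtain ⟨C, hC⟩ := hK.exists_bound
  have hon : IntegrableOn (fun x => K x ^ 2 * g x) (Set.Icc (-1 : Vec d) 1) := by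
    refine Measure.integrableOn_of_bounded (M := C ^ 2 * B) isCompact_Icc.measure_ne_top
      ((hK.measurable.pow_const 2).mul hg).aestronglyMeasurable ?_
    refine (ae_restrict_iff' measurableSet_Icc).2 (.of_forall fun x hx => ?_)
    rw [norm_mul, norm_pow, Real.norm_eq_abs, Real.norm_eq_abs]
    exact mul_le_mul (pow_le_pow_left₀ (abs_nonneg _) (hC x) 2) (hB x hx) (abs_nonneg _)
      (sq_nonneg _)
  refine hon.integrable_of_forall_notMem_eq_zero fun x hx => ?_
  simp [hK.eq_zero hx]

lemma IsProductKernel.integrable_moment (hK : IsProductKernel d K) (i : Fin d) {b : ℝ}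
    (hb : 0 ≤ b) : Integrable fun x : Vec d => |x i| ^ b * K x ^ 2 := by
  simp_rw [mul_comm (|_| ^ b)]
  refine hK.integrable_sq_mul (B := 1) (by fun_prop) fun x hx => ?_
  rw [abs_of_nonneg (by positivity)]
  exact rpow_le_one (abs_nonneg _) (abs_le.2 ⟨hx.1 i, hx.2 i⟩) hb

lemma IsProductKernel.moment_pos (hK : IsProductKernel d K) (i : Fin d) {b : ℝ}
    (hb : 0 ≤ b) : 0 < ∫ x : Vec d, |x i| ^ b * K x ^ 2 := by
  rw [integral_pos_iff_support_of_nonneg (fun x => by positivity) (hK.integrable_moment i hb)]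
  obtain ⟨U, hU, hUo, h0⟩ := eventually_nhds_iff.1 hK.eventually_pos
  have hVo : IsOpen (U ∩ {x : Vec d | x i ≠ 0}) :=
    hUo.inter (isOpen_ne_fun (continuous_apply i) continuous_const)
  have hne : (U ∩ {x : Vec d | x i ≠ 0}).Nonempty := by
    have hc : Filter.Tendsto (fun (s : ℝ) (_ : Fin d) => s) (nhds 0) (nhds 0) :=
      (continuous_pi fun _ => continuous_id).tendsto' _ _ rfl
    have h1 : ∀ᶠ s in nhdsWithin (0 : ℝ) {0}ᶜ, (fun _ : Fin d => s) ∈ U :=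
      (hc.eventually (hUo.mem_nhds h0)).filter_mono nhdsWithin_le_nhds
    obtain ⟨s, hs, hs0⟩ := (h1.and self_mem_nhdsWithin).exists
    exact ⟨_, hs, hs0⟩
  refine (hVo.measure_pos volume hne).trans_le (measure_mono fun x hx => ?_)
  have h1 : 0 < |x i| := abs_pos.2 hx.2
  have h2 := hU x hx.1
  exact (by positivity : 0 < |x i| ^ b * K x ^ 2).ne'

lemma IsProductKernel.K2sq_pos (hK : IsProductKernel d K) (hd : 1 ≤ d) : 0 < K2sq d K := by
  simpa [K2sq] using hK.moment_pos (⟨0, hd⟩ : Fin d) le_rfl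

lemma IsProductKernel.c8const_pos (hK : IsProductKernel d K) (hd : 1 ≤ d) {β : Vec d}
    (hβ : ∀ i, 0 < β i) {L : ℝ} (hL : 0 < L) : 0 < c8const d K β L := by
  have : Nonempty (Fin d) := ⟨⟨0, hd⟩⟩
  obtain ⟨i, hi⟩ := exists_eq_ciInf_of_finite (f := fun i : Fin d =>
    (2 * d * L * (∫ x : Vec d, |x i| ^ (β i) * (K x) ^ 2) / K2sq d K) ^ (-(β i)⁻¹))
  have h1 := hK.moment_pos i (hβ i).le
  have h2 := hK.K2sq_pos hd
  have h3 : (0 : ℝ) < d := by exact_mod_cast hd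
  rw [c8const, ← hi]
  positivity

/-- The defining property of `c₈`: each directional bias term is at most `‖K‖₂² / (2d)`. -/
lemma IsProductKernel.c8const_rpow_le (hK : IsProductKernel d K) (hd : 1 ≤ d) {β : Vec d}
    (hβ : ∀ i, 0 < β i) {L : ℝ} (hL : 0 < L) (i : Fin d) :
    L * (∫ x : Vec d, |x i| ^ (β i) * (K x) ^ 2) * c8const d K β L ^ β i ≤
      K2sq d K / (2 * d) := by
  have h1 := hK.moment_pos i (hβ i).le
  have h2 := hK.K2sq_pos hd
  have h3 : (0 : ℝ) < d := by exact_mod_cast hd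
  set I := ∫ x : Vec d, |x i| ^ (β i) * (K x) ^ 2
  have hle : c8const d K β L ≤ (2 * d * L * I / K2sq d K) ^ (-(β i)⁻¹) :=
    ciInf_le (Set.finite_range _).bddBelow i
  have hle' : c8const d K β L ^ β i ≤ (2 * d * L * I / K2sq d K)⁻¹ := by
    refine (rpow_le_rpow (hK.c8const_pos hd hβ hL).le hle (hβ i).le).trans_eq ?_
    rw [← rpow_mul (by positivity), neg_mul, inv_mul_cancel₀ (hβ i).ne', rpow_neg_one]
  refine (mul_le_mul_of_nonneg_left hle' (by positivity)).trans_eq ?_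
  field_simp

end ProductKernel

section LocalBound

variable {d : ℕ} {β : Vec d} {L : ℝ} {p : Vec d → ℝ}

/-- The second-order difference of a slice has no linear term. -/
lemma HolderAniso.abs_symm_diff_le (hp : HolderAniso d β L p) (i : Fin d)
    (hβ : β i ≤ 2) (x : Vec d) (y u : ℝ) :
    |sliceFun p i x (y - u) + sliceFun p i x (y + u) - 2 * sliceFun p i x y| ≤
      2 * (L * |u| ^ β i) := by
  have h1 := (hp i).2 x (y - u) y
  have h2 := (hp i).2 x (y + u) y
  have hl : hfl (β i) ≤ 1 := by
    have : ⌈β i⌉₊ ≤ 2 := Nat.ceil_le.2 (by exact_mod_cast hβ)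
    unfold hfl; omega
  have hT : taylorPoly (sliceFun p i x) (hfl (β i)) y (y - u) +
      taylorPoly (sliceFun p i x) (hfl (β i)) y (y + u) = 2 * sliceFun p i x y := by
    interval_cases hfl (β i)
    · simp [taylorPoly]; ring
    · simp [taylorPoly, Finset.sum_range_succ]; ring
  rw [show y - u - y = -u by ring, abs_neg] at h1
  rw [show y + u - y = u by ring] at h2
  rw [← hT]
  rw [abs_le] at *
  constructor <;> linarith [h1.1, h1.2, h2.1, h2.2]

/-- For a nonnegative function the symmetric difference controls the value one step away. -/
lemma HolderAniso.slice_le (hp : HolderAniso d β L p) (h0 : ∀ x, 0 ≤ p x) (hL : 0 ≤ L)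
    (i : Fin d) (hβ : 0 ≤ β i ∧ β i ≤ 2) (x : Vec d) {y u : ℝ} (hu : |u| ≤ 1) :
    sliceFun p i x (y + u) ≤ 2 * sliceFun p i x y + 2 * L := by
  have h1 := (abs_le.1 (hp.abs_symm_diff_le i hβ.2 x y u)).2
  have h2 : L * |u| ^ β i ≤ L :=
    mul_le_of_le_one_right hL (rpow_le_one (abs_nonneg _) hu hβ.1)
  have h3 : 0 ≤ sliceFun p i x (y - u) := h0 _
  linarith

lemma HolderAniso.exists_bound_unit_box (hp : HolderAniso d β L p) (h0 : ∀ x, 0 ≤ p x)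
    (hL : 0 ≤ L) (hβ : ∀ i, 0 ≤ β i ∧ β i ≤ 2) (t : Vec d) :
    ∃ B, ∀ z : Vec d, (∀ i, |z i - t i| ≤ 1) → p z ≤ B := by
  suffices H : ∀ T : Finset (Fin d), ∃ B, ∀ z : Vec d, (∀ i, |z i - t i| ≤ 1) →
      (∀ i ∉ T, z i = t i) → p z ≤ B by
    obtain ⟨B, hB⟩ := H Finset.univ
    exact ⟨B, fun z hz => hB z hz (by simp)⟩
  intro T
  induction T using Finset.induction_on with
  | empty => exact ⟨p t, fun z _ hz => (congrArg p (funext fun i => hz i (by simp))).le⟩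
  | insert i T hi ih =>
    obtain ⟨B, hB⟩ := ih
    refine ⟨2 * B + 2 * L, fun z hz hzT => ?_⟩
    have h1 := hp.slice_le h0 hL i (hβ i) z (y := t i) (hz i)
    have h2 : p (Function.update z i (t i)) ≤ B := by
      refine hB _ (fun k => ?_) fun k hk => ?_
      · rcases eq_or_ne k i with rfl | h
        · simp
        · simpa [h] using hz k
      · rcases eq_or_ne k i with rfl | h
        · simp
        · simpa [h] using hzT k (by simp [h, hk])
    simp only [sliceFun, add_sub_cancel, Function.update_eq_self] at h1
    linarith

end LocalBound

/-- Change of variables for an invertible diagonal scaling of `ℝ^d`. -/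
lemma integral_comp_diagonal {d : ℕ} (D : Vec d) (hD : ∀ i, D i ≠ 0) {f : Vec d → ℝ}
    (hf : Measurable f) :
    ∫ x, f x = |∏ i, D i| * ∫ x : Vec d, f (fun i => D i * x i) := by
  have hdet : (Matrix.diagonal D).det ≠ 0 := by
    rw [Matrix.det_diagonal]
    exact Finset.prod_ne_zero_iff.2 fun i _ => hD i
  have h := Real.smul_map_diagonal_volume_pi hdet
  conv_lhs => rw [← h]
  rw [integral_smul_measure, Matrix.det_diagonal, ENNReal.toReal_ofReal (abs_nonneg _),
    smul_eq_mul, integral_map (LinearMap.continuous_of_finiteDimensional _).aemeasurable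
      hf.aestronglyMeasurable]
  congr 2 with x
  congr 1 with i
  simp [Matrix.mulVec_diagonal]

/-- The average `∫ K²(x) p(t - h x) dx`; it makes sense also for bandwidths with zero entries. -/
noncomputable def kernelSqAvg (d : ℕ) (K p : Vec d → ℝ) (t h : Vec d) : ℝ :=
  ∫ x : Vec d, K x ^ 2 * p (fun i => t i - h i * x i)

section KernelSqAvg

variable {d : ℕ} {K p : Vec d → ℝ} {β : Vec d} {L : ℝ}

lemma sigmaSq_eq (hK : IsProductKernel d K) (hp : Measurable p) (n : ℕ) (t : Vec d) {h : Vec d}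
    (hh : ∀ i, 0 < h i) :
    sigmaSq d n K p h t = kernelSqAvg d K p t h / (n * ∏ i, h i) := by
  have hP : 0 < ∏ i, h i := Finset.prod_pos fun i _ => hh i
  have hm : Measurable fun y : Vec d =>
      (scaledKernel d K h y) ^ 2 * p (fun i => t i - y i) := by
    unfold scaledKernel
    have h1 : Measurable fun y : Vec d => K (fun i => y i / h i) :=
      hK.measurable.comp (by fun_prop)
    have h2 : Measurable fun y : Vec d => p (fun i => t i - y i) := hp.comp (by fun_prop)
    exact ((h1.const_mul _).pow_const 2).mul h2
  have h1 : ∫ y, (scaledKernel d K h (fun i => t i - y i)) ^ 2 * p y =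
      ∫ y : Vec d, (scaledKernel d K h y) ^ 2 * p (fun i => t i - y i) := by
    rw [← integral_sub_left_eq_self _ volume t]
    refine integral_congr_ae (.of_forall fun y => ?_)
    simp only [Pi.sub_apply, sub_sub_cancel]
    rfl
  have h2 : ∀ x : Vec d, (fun i => h i * x i / h i) = x := fun x =>
    funext fun i => mul_div_cancel_left₀ _ (hh i).ne'
  rw [sigmaSq, h1, integral_comp_diagonal h (fun i => (hh i).ne') hm, abs_of_pos hP]
  simp only [scaledKernel, h2, mul_pow, mul_assoc, integral_const_mul, kernelSqAvg]
  field_simp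

lemma kernelSqAvg_update_neg (hK : IsProductKernel d K) (hp : Measurable p) (t h : Vec d)
    (i : Fin d) (s : ℝ) :
    kernelSqAvg d K p t (Function.update h i (-s)) =
      kernelSqAvg d K p t (Function.update h i s) := by
  have hD : ∀ k, Function.update (1 : Vec d) i (-1) k ≠ 0 := by
    intro k
    rcases eq_or_ne k i with rfl | hk
    · simp
    · simp [hk]
  have hprod : |∏ k, Function.update (1 : Vec d) i (-1) k| = 1 := by
    rw [Finset.prod_update_of_mem (Finset.mem_univ i)]
    simp
  have hm : Measurable fun x : Vec d =>
      K x ^ 2 * p (fun k => t k - Function.update h i (-s) k * x k) :=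
    (hK.measurable.pow_const 2).mul (hp.comp (by fun_prop))
  rw [kernelSqAvg, integral_comp_diagonal _ hD hm, hprod, one_mul, kernelSqAvg]
  refine integral_congr_ae (.of_forall fun x => ?_)
  have h1 : (fun k => Function.update (1 : Vec d) i (-1) k * x k) =
      Function.update x i (-x i) := by
    ext k
    rcases eq_or_ne k i with rfl | hk
    · simp
    · simp [hk]
  have h2 : (fun k => t k - Function.update h i (-s) k *
      (Function.update (1 : Vec d) i (-1) k * x k)) =
      fun k => t k - Function.update h i s k * x k := by
    ext k
    rcases eq_or_ne k i with rfl | hk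
    · simp
    · simp [hk]
  simp only [h1, h2, hK.update_neg]

lemma integrable_kernelSqAvg (hK : IsProductKernel d K) (hβ : ∀ i, 0 < β i ∧ β i ≤ 2)
    (hL : 0 < L) (hp : Pclass d β L p) (t : Vec d) {h : Vec d} (hh : ∀ i, |h i| ≤ 1) :
    Integrable fun x : Vec d => K x ^ 2 * p (fun i => t i - h i * x i) := by
  obtain ⟨B, hB⟩ := hp.2.exists_bound_unit_box hp.1.2.1 hL.le
    (fun i => ⟨(hβ i).1.le, (hβ i).2⟩) t
  refine hK.integrable_sq_mul (B := B) (hp.1.1.comp (by fun_prop)) fun x hx => ?_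
  rw [abs_of_nonneg (hp.1.2.1 _)]
  refine hB _ fun i => ?_
  rw [sub_sub_cancel_left, abs_neg, abs_mul]
  exact mul_le_one₀ (hh i) (abs_nonneg _) (abs_le.2 ⟨hx.1 i, hx.2 i⟩)

/-- Setting a single bandwidth to zero changes the average by at most the directional bias. -/
lemma abs_kernelSqAvg_update_sub_le (hK : IsProductKernel d K)
    (hβ : ∀ i, 0 < β i ∧ β i ≤ 2) (hL : 0 < L) (hp : Pclass d β L p) (t : Vec d) {h : Vec d}
    (hh : ∀ i, |h i| ≤ 1) (i : Fin d) {s : ℝ} (hs : 0 ≤ s) (hs1 : s ≤ 1) :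
    |kernelSqAvg d K p t (Function.update h i s) -
        kernelSqAvg d K p t (Function.update h i 0)| ≤
      L * (∫ x : Vec d, |x i| ^ (β i) * (K x) ^ 2) * s ^ β i := by
  have hup : ∀ r : ℝ, |r| ≤ 1 → ∀ k, |Function.update h i r k| ≤ 1 := by
    intro r hr k
    rcases eq_or_ne k i with rfl | hk
    · simpa using hr
    · simpa [hk] using hh k
  have habs : |s| ≤ 1 := by rwa [abs_of_nonneg hs]
  have i1 := integrable_kernelSqAvg hK hβ hL hp t (hup s habs)
  have i2 := integrable_kernelSqAvg hK hβ hL hp t (hup (-s) (by rwa [abs_neg]))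
  have i3 := integrable_kernelSqAvg hK hβ hL hp t (hup 0 (by simp))
  have hslice : ∀ (r : ℝ) (x : Vec d), p (fun k => t k - Function.update h i r k * x k) =
      sliceFun p i (fun k => t k - h k * x k) (t i - r * x i) := by
    intro r x
    unfold sliceFun
    congr 1 with k
    rcases eq_or_ne k i with rfl | hk
    · simp
    · simp [hk]
  have heq : 2 * (kernelSqAvg d K p t (Function.update h i s) -
        kernelSqAvg d K p t (Function.update h i 0)) =
      ∫ x : Vec d, (K x ^ 2 * p (fun k => t k - Function.update h i s k * x k) +
        K x ^ 2 * p (fun k => t k - Function.update h i (-s) k * x k) -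
        2 * (K x ^ 2 * p (fun k => t k - Function.update h i 0 k * x k))) := by
    rw [integral_sub (f := fun x => _ + _) (i1.add i2) (i3.const_mul 2), integral_add i1 i2,
      integral_const_mul]
    have := kernelSqAvg_update_neg hK hp.1.1 t h i s
    unfold kernelSqAvg at this ⊢
    linarith
  have hbound : |2 * (kernelSqAvg d K p t (Function.update h i s) -
        kernelSqAvg d K p t (Function.update h i 0))| ≤
      ∫ x : Vec d, 2 * (L * s ^ β i) * (|x i| ^ (β i) * (K x) ^ 2) := by
    rw [heq, ← Real.norm_eq_abs]
    refine norm_integral_le_of_norm_le ((hK.integrable_moment i (hβ i).1.le).const_mul _)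
      (.of_forall fun x => ?_)
    have h1 := hp.2.abs_symm_diff_le i (hβ i).2 (fun k => t k - h k * x k) (t i) (s * x i)
    rw [abs_mul, abs_of_nonneg hs, mul_rpow hs (abs_nonneg _)] at h1
    simp only [hslice, neg_mul, sub_neg_eq_add, zero_mul, sub_zero]
    rw [Real.norm_eq_abs, show ∀ a b c k : ℝ, k * a + k * b - 2 * (k * c) =
      k * (a + b - 2 * c) from fun a b c k => by ring, abs_mul, abs_of_nonneg (sq_nonneg _)]
    refine (mul_le_mul_of_nonneg_left h1 (sq_nonneg _)).trans_eq (by ring)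
  rw [abs_mul, abs_two, integral_const_mul] at hbound
  linarith

/-- Setting the bandwidths in `T` to zero changes the average by at most the total bias. -/
lemma abs_kernelSqAvg_sub_le_sum (hK : IsProductKernel d K)
    (hβ : ∀ i, 0 < β i ∧ β i ≤ 2) (hL : 0 < L) (hp : Pclass d β L p) (t : Vec d) {h : Vec d}
    (hh0 : ∀ i, 0 ≤ h i) (hh1 : ∀ i, h i ≤ 1) (T : Finset (Fin d)) :
    |kernelSqAvg d K p t h - kernelSqAvg d K p t (fun i => if i ∈ T then 0 else h i)| ≤
      ∑ i ∈ T, L * (∫ x : Vec d, |x i| ^ (β i) * (K x) ^ 2) * h i ^ β i := by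
  induction T using Finset.induction_on with
  | empty => simp
  | insert i T hi ih =>
    have hz : ∀ k, |if k ∈ T then 0 else h k| ≤ 1 := by
      intro k
      split_ifs
      · simp
      · rw [abs_of_nonneg (hh0 k)]; exact hh1 k
    have h1 := abs_kernelSqAvg_update_sub_le hK hβ hL hp t hz i (hh0 i) (hh1 i)
    rw [show Function.update (fun k => if k ∈ T then 0 else h k) i (h i) =
        fun k => if k ∈ T then 0 else h k from by
          rw [Function.update_eq_self_iff]; simp [hi],
      show Function.update (fun k => if k ∈ T then 0 else h k) i 0 =
        fun k => if k ∈ insert i T then 0 else h k from by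
          ext k
          rcases eq_or_ne k i with rfl | hk
          · simp
          · simp [hk]] at h1
    rw [Finset.sum_insert hi, add_comm]
    exact (abs_sub_le _ _ _).trans (add_le_add ih h1)

/-- The total bias for bandwidths with `h_i ≤ c₈ M^{1/β_i}` on `T` is at most `‖K‖₂² M / 2`. -/
lemma sum_bias_le (hK : IsProductKernel d K) (hd : 1 ≤ d) (hβ : ∀ i, 0 < β i) (hL : 0 < L)
    {M : ℝ} (hM : 0 ≤ M) {h : Vec d} (hh0 : ∀ i, 0 ≤ h i) (T : Finset (Fin d))
    (hT : ∀ i ∈ T, h i ≤ c8const d K β L * M ^ (β i)⁻¹) :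
    ∑ i ∈ T, L * (∫ x : Vec d, |x i| ^ (β i) * (K x) ^ 2) * h i ^ β i ≤
      K2sq d K * M / 2 := by
  have hd' : (0 : ℝ) < d := by exact_mod_cast hd
  have hc := hK.c8const_pos hd hβ hL
  have hK2 := hK.K2sq_pos hd
  calc _ ≤ ∑ _i ∈ T, K2sq d K / (2 * d) * M := by
        refine Finset.sum_le_sum fun i hi => ?_
        have h1 : h i ^ β i ≤ c8const d K β L ^ β i * M := by
          refine (rpow_le_rpow (hh0 i) (hT i hi) (hβ i).le).trans_eq ?_
          rw [mul_rpow hc.le (by positivity), rpow_inv_rpow hM (hβ i).ne']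
        have h2 := hK.moment_pos i (hβ i).le
        refine (mul_le_mul_of_nonneg_left h1 (by positivity)).trans ?_
        rw [← mul_assoc]
        exact mul_le_mul_of_nonneg_right (hK.c8const_rpow_le hd hβ hL i) hM
    _ ≤ ∑ _i : Fin d, K2sq d K / (2 * d) * M :=
        Finset.sum_le_sum_of_subset_of_nonneg (Finset.subset_univ _) fun _ _ _ => by positivity
    _ = K2sq d K * M / 2 := by
        simp only [Finset.sum_const, Finset.card_univ, Fintype.card_fin, nsmul_eq_mul]
        field_simp

/-- Two bandwidths which, in each direction, agree or are both at most `c₈ M^{1/β_i}`. -/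
lemma kernelSqAvg_le_add (hK : IsProductKernel d K) (hd : 1 ≤ d)
    (hβ : ∀ i, 0 < β i ∧ β i ≤ 2) (hL : 0 < L) (hp : Pclass d β L p) (t : Vec d)
    {M : ℝ} (hM : 0 ≤ M) {h h' : Vec d} (hh0 : ∀ i, 0 ≤ h i) (hh1 : ∀ i, h i ≤ 1)
    (hh0' : ∀ i, 0 ≤ h' i) (hh1' : ∀ i, h' i ≤ 1)
    (hagree : ∀ i, h i ≠ h' i → h i ≤ c8const d K β L * M ^ (β i)⁻¹ ∧
      h' i ≤ c8const d K β L * M ^ (β i)⁻¹) :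
    kernelSqAvg d K p t h ≤ kernelSqAvg d K p t h' + K2sq d K * M := by
  classical
  set T : Finset (Fin d) := {i | h i ≠ h' i} with hTdef
  have hT : ∀ i ∈ T, h i ≠ h' i := fun i hi => (Finset.mem_filter.1 hi).2
  have hz : (fun i => if i ∈ T then 0 else h i) = fun i => if i ∈ T then 0 else h' i := by
    ext i
    by_cases hi : h i = h' i
    · simp [hi]
    · simp [hTdef, hi]
  have h1 := abs_kernelSqAvg_sub_le_sum hK hβ hL hp t hh0 hh1 T
  have h2 := abs_kernelSqAvg_sub_le_sum hK hβ hL hp t hh0' hh1' T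
  have h3 := sum_bias_le hK hd (fun i => (hβ i).1) hL hM hh0 T
    fun i hi => (hagree i (hT i hi)).1
  have h4 := sum_bias_le hK hd (fun i => (hβ i).1) hL hM hh0' T
    fun i hi => (hagree i (hT i hi)).2
  rw [hz] at h1
  linarith [(abs_le.1 h1).2, (abs_le.1 h2).1]

lemma le_kernelSqAvg (hK : IsProductKernel d K) (hd : 1 ≤ d)
    (hβ : ∀ i, 0 < β i ∧ β i ≤ 2) (hL : 0 < L) (hp : Pclass d β L p) (t : Vec d)
    {M : ℝ} (hM : 0 ≤ M) {h : Vec d} (hh0 : ∀ i, 0 ≤ h i) (hh1 : ∀ i, h i ≤ 1)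
    (hh : ∀ i, h i ≤ c8const d K β L * M ^ (β i)⁻¹) :
    K2sq d K * (p t - M / 2) ≤ kernelSqAvg d K p t h := by
  have h1 := abs_kernelSqAvg_sub_le_sum hK hβ hL hp t hh0 hh1 Finset.univ
  have h2 := sum_bias_le hK hd (fun i => (hβ i).1) hL hM hh0 Finset.univ fun i _ => hh i
  have h3 : kernelSqAvg d K p t (fun i => if i ∈ Finset.univ then 0 else h i) =
      K2sq d K * p t := by
    simp [kernelSqAvg, K2sq, integral_mul_const]
  rw [h3] at h1
  linarith [(abs_le.1 h1).1]

end KernelSqAvg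

section ReferenceBandwidth

/-- The bias level `M` of the reference bandwidth: `h̄_i = c₈ M^{1/β_i}`. -/
noncomputable def refLevel (bb q P : ℝ) : ℝ :=
  max (q ^ (bb / (bb + 1))) ((P * q) ^ (bb / (2 * bb + 1)))

lemma refLevel_pos {bb q : ℝ} (hq : 0 < q) (P : ℝ) : 0 < refLevel bb q P :=
  (rpow_pos_of_pos hq _).trans_le (le_max_left _ _)

lemma refLevel_le_or_eq {bb q P : ℝ} (hbb : 0 < bb) (hq : 0 < q) (hP : 0 ≤ P) :
    refLevel bb q P ≤ P ∨ refLevel bb q P * refLevel bb q P ^ bb⁻¹ = q := by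
  have ha : 0 < q ^ (bb / (bb + 1)) := rpow_pos_of_pos hq _
  have haq : q ^ (bb / (bb + 1)) * (q ^ (bb / (bb + 1))) ^ bb⁻¹ = q := by
    rw [← rpow_one_add' ha.le (by positivity), ← rpow_mul hq.le]
    conv_rhs => rw [← rpow_one q]
    congr 1
    field_simp
  unfold refLevel
  set a := q ^ (bb / (bb + 1))
  have hbq : (P * q) ^ (bb / (2 * bb + 1)) * (P * q) ^ (bb / (2 * bb + 1)) *
      ((P * q) ^ (bb / (2 * bb + 1))) ^ bb⁻¹ = P * q := by
    have h0 : 0 ≤ P * q := by positivity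
    rw [← pow_two, ← rpow_natCast, ← rpow_add' (by positivity) (by positivity), ← rpow_mul h0]
    conv_rhs => rw [← rpow_one (P * q)]
    congr 1
    push_cast
    field_simp
  set b := (P * q) ^ (bb / (2 * bb + 1))
  rcases le_or_gt b a with hab | hab
  · right
    rwa [max_eq_left hab]
  · left
    rw [max_eq_right hab.le]
    have hb : 0 < b := ha.trans hab
    have hq' : q ≤ b * b ^ bb⁻¹ := by
      rw [← haq]
      gcongr
    have h2 : b * (b * b ^ bb⁻¹) ≤ P * (b * b ^ bb⁻¹) := by
      rw [← mul_assoc, hbq]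
      exact mul_le_mul_of_nonneg_left hq' hP
    exact le_of_mul_le_mul_right h2 (by positivity)

lemma hbar_eq {d : ℕ} (K : Vec d → ℝ) {β : Vec d} (hβ : ∀ i, 0 < β i) (L : ℝ) {n : ℕ}
    {P : ℝ} (hP : 0 ≤ P) (i : Fin d) :
    hbar d K β L n P i =
      c8const d K β L * refLevel (betaBar β) (Real.log n / n) P ^ (β i)⁻¹ := by
  have hq : 0 ≤ Real.log n / n := div_nonneg (Real.log_natCast_nonneg n) n.cast_nonneg
  have hPq : 0 ≤ P * (Real.log n / n) := mul_nonneg hP hq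
  rw [hbar, refLevel, rpow_mul hq, mul_div_assoc, rpow_mul hPq,
    (monotoneOn_rpow_Ici_of_exponent_nonneg (inv_nonneg.2 (hβ i).le)).map_max
      (rpow_nonneg hq _) (rpow_nonneg hPq _)]

lemma bwOf_le_of_jbar_le {d : ℕ} {K : Vec d → ℝ} {β : Vec d} {L : ℝ} {n : ℕ} {P : ℝ}
    {j : Fin d → ℕ} {i : Fin d} (hpos : 0 < hbar d K β L n P i)
    (hj : jbar d K β L n P i ≤ (j i : ℤ)) : bwOf d j i ≤ hbar d K β L n P i := by
  have h1 : Real.logb 2 (1 / hbar d K β L n P i) < ((j i : ℤ) : ℝ) := by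
    refine (Int.lt_floor_add_one _).trans_le ?_
    exact_mod_cast hj
  rw [one_div, Real.logb_inv, Int.cast_natCast] at h1
  exact (Real.le_logb_iff_rpow_le one_lt_two hpos).1 (by linarith)

lemma bwOf_pos {d : ℕ} (j : Fin d → ℕ) (i : Fin d) : 0 < bwOf d j i :=
  rpow_pos_of_pos two_pos _

lemma bwOf_le_one {d : ℕ} (j : Fin d → ℕ) (i : Fin d) : bwOf d j i ≤ 1 :=
  rpow_le_one_of_one_le_of_nonpos one_le_two (by simp)

lemma bwOf_anti {d : ℕ} {j m : Fin d → ℕ} {i : Fin d} (h : j i ≤ m i) :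
    bwOf d m i ≤ bwOf d j i :=
  rpow_le_rpow_of_exponent_le one_le_two (by simpa using h)

lemma prod_bwOf_anti {d : ℕ} {j m : Fin d → ℕ} (h : ∀ i, j i ≤ m i) :
    ∏ i, bwOf d m i ≤ ∏ i, bwOf d j i :=
  Finset.prod_le_prod (fun i _ => (bwOf_pos m i).le) fun i _ => bwOf_anti (h i)

lemma truncLevel_anti {d n : ℕ} (hn : 0 < n) {j m : Fin d → ℕ} (h : ∀ i, j i ≤ m i) :
    truncLevel d n (bwOf d j) ≤ truncLevel d n (bwOf d m) := by
  have h1 : 0 < ∏ i, bwOf d m i := Finset.prod_pos fun i _ => bwOf_pos m i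
  have h2 := prod_bwOf_anti h
  unfold truncLevel
  gcongr

end ReferenceBandwidth

section Ordering

variable {d : ℕ} {K p : Vec d → ℝ} {β : Vec d} {L : ℝ}

lemma betaBar_pos (hd : 1 ≤ d) (hβ : ∀ i, 0 < β i) : 0 < betaBar β := by
  have : Nonempty (Fin d) := ⟨⟨0, hd⟩⟩
  exact inv_pos.2 (Finset.sum_pos (fun i _ => inv_pos.2 (hβ i)) Finset.univ_nonempty)

/-- Below the reference bandwidth the truncated variance dominates the bias level. -/
lemma refLevel_div_le (hd : 1 ≤ d) (hK : IsProductKernel d K)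
    (hβ : ∀ i, 0 < β i ∧ β i ≤ 2) (hL : 0 < L) (hp : Pclass d β L p) (t : Vec d)
    {n : ℕ} (hn : 2 ≤ n) {h : Vec d} (hh0 : ∀ i, 0 < h i) (hh1 : ∀ i, h i ≤ 1)
    (hh : ∀ i, h i ≤ c8const d K β L *
      refLevel (betaBar β) (Real.log n / n) (p t) ^ (β i)⁻¹) :
    K2sq d K * refLevel (betaBar β) (Real.log n / n) (p t) / (n * ∏ i, h i) ≤
      (2 + K2sq d K * c8const d K β L ^ d / Real.log 2) * sigmaSqTrunc d n K p h t := by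
  have hn0 : (0 : ℝ) < n := by positivity
  have hlog2 : 0 < Real.log 2 := Real.log_pos one_lt_two
  have hlog : Real.log 2 ≤ Real.log n := Real.log_le_log two_pos (by exact_mod_cast hn)
  have hlogn : 0 < Real.log n := hlog2.trans_le hlog
  have hq : 0 < Real.log n / n := by positivity
  have hM := refLevel_pos (bb := betaBar β) hq (p t)
  have hK2 := hK.K2sq_pos hd
  have hc := hK.c8const_pos hd (fun i => (hβ i).1) hL
  have hP : 0 < ∏ i, h i := Finset.prod_pos fun i _ => hh0 i
  have htr : 0 ≤ truncLevel d n h := by unfold truncLevel; positivity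
  have hσ : 0 ≤ sigmaSqTrunc d n K p h t := htr.trans (le_max_left _ _)
  have hcase := refLevel_le_or_eq (betaBar_pos hd fun i => (hβ i).1) hq (hp.1.2.1 t)
  set M := refLevel (betaBar β) (Real.log n / n) (p t)
  rcases hcase with hMP | hMq
  · have h1 := le_kernelSqAvg hK hd hβ hL hp t hM.le (fun i => (hh0 i).le) hh1 hh
    have h2 : K2sq d K * M ≤ 2 * kernelSqAvg d K p t h := by
      nlinarith [mul_le_mul_of_nonneg_left hMP hK2.le]
    calc K2sq d K * M / (n * ∏ i, h i) ≤ 2 * kernelSqAvg d K p t h / (n * ∏ i, h i) := by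
          gcongr
      _ = 2 * sigmaSq d n K p h t := by rw [sigmaSq_eq hK hp.1.1 n t hh0, mul_div_assoc]
      _ ≤ 2 * sigmaSqTrunc d n K p h t := by gcongr; exact le_max_right _ _
      _ ≤ _ := by
          gcongr
          exact le_add_of_nonneg_right (by positivity)
  · have hprod : ∏ i, h i ≤ c8const d K β L ^ d * M ^ (betaBar β)⁻¹ := by
      refine (Finset.prod_le_prod (fun i _ => (hh0 i).le) fun i _ => hh i).trans_eq ?_
      rw [Finset.prod_mul_distrib, ← rpow_sum_of_pos hM, betaBar, inv_inv]
      simp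
    have h1 : M * ∏ i, h i ≤ c8const d K β L ^ d * (Real.log n / n) := by
      rw [← hMq]
      refine (mul_le_mul_of_nonneg_left hprod hM.le).trans_eq (by ring)
    calc K2sq d K * M / (n * ∏ i, h i)
        = K2sq d K * (M * ∏ i, h i) / (n * (∏ i, h i) ^ 2) := by field_simp
      _ ≤ K2sq d K * (c8const d K β L ^ d * (Real.log n / n)) / (n * (∏ i, h i) ^ 2) := by
          gcongr
      _ = K2sq d K * c8const d K β L ^ d / Real.log n * truncLevel d n h := by
          unfold truncLevel
          field_simp
      _ ≤ K2sq d K * c8const d K β L ^ d / Real.log 2 * sigmaSqTrunc d n K p h t := by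
          gcongr
          exact le_max_left _ _
      _ ≤ _ := by
          gcongr
          exact le_add_of_nonneg_left zero_le_two

/-- Coarsening `m` to `l` only in directions where both stay below the reference bandwidth costs
at most a multiple of the truncated variance at any finer `k` below the reference bandwidth. -/
lemma sigmaSqTrunc_le_add (hd : 1 ≤ d) (hK : IsProductKernel d K)
    (hβ : ∀ i, 0 < β i ∧ β i ≤ 2) (hL : 0 < L) (hp : Pclass d β L p) (t : Vec d)
    {n : ℕ} (hn : 2 ≤ n) {l m k : Fin d → ℕ} (hlm : ∀ i, l i ≤ m i) (hlk : ∀ i, l i ≤ k i)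
    (hk : ∀ i, jbar d K β L n (p t) i ≤ (k i : ℤ))
    (hl : ∀ i, l i ≠ m i → jbar d K β L n (p t) i ≤ (l i : ℤ)) :
    sigmaSqTrunc d n K p (bwOf d l) t ≤ sigmaSqTrunc d n K p (bwOf d m) t +
      (2 + K2sq d K * c8const d K β L ^ d / Real.log 2) *
        sigmaSqTrunc d n K p (bwOf d k) t := by
  have hn0 : (0 : ℝ) < n := by positivity
  have hlog2 : 0 < Real.log 2 := Real.log_pos one_lt_two
  have hq : 0 < Real.log n / n :=
    div_pos (Real.log_pos (by exact_mod_cast hn)) hn0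
  have hM := refLevel_pos (bb := betaBar β) hq (p t)
  have hK2 := hK.K2sq_pos hd
  have hc := hK.c8const_pos hd (fun i => (hβ i).1) hL
  have hbar_eq' := hbar_eq K (fun i => (hβ i).1) L (n := n) (hp.1.2.1 t)
  have hsmall : ∀ (r : Fin d → ℕ) (i : Fin d), jbar d K β L n (p t) i ≤ (r i : ℤ) →
      bwOf d r i ≤ c8const d K β L *
        refLevel (betaBar β) (Real.log n / n) (p t) ^ (β i)⁻¹ := by
    intro r i hr
    rw [← hbar_eq']
    refine bwOf_le_of_jbar_le ?_ hr
    rw [hbar_eq']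
    positivity
  have hlevel := refLevel_div_le hd hK hβ hL hp t hn (bwOf_pos k) (bwOf_le_one k)
    fun i => hsmall k i (hk i)
  set M := refLevel (betaBar β) (Real.log n / n) (p t)
  have hPm : 0 < ∏ i, bwOf d m i := Finset.prod_pos fun i _ => bwOf_pos m i
  have hPk : 0 < ∏ i, bwOf d k i := Finset.prod_pos fun i _ => bwOf_pos k i
  have hnonneg : 0 ≤ K2sq d K * M / (n * ∏ i, bwOf d k i) := by positivity
  refine max_le ?_ ?_
  · exact (truncLevel_anti (by omega) hlm).trans
      ((le_max_left _ _).trans (le_add_of_nonneg_right (hnonneg.trans hlevel)))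
  · have havg := kernelSqAvg_le_add hK hd hβ hL hp t hM.le (fun i => (bwOf_pos l i).le)
      (bwOf_le_one l) (fun i => (bwOf_pos m i).le) (bwOf_le_one m) fun i hi => by
        have hne : l i ≠ m i := fun h => hi (by simp [bwOf, h])
        have hli := hl i hne
        exact ⟨hsmall l i hli, hsmall m i (hli.trans (by exact_mod_cast hlm i))⟩
    have hA : 0 ≤ kernelSqAvg d K p t (bwOf d m) :=
      integral_nonneg fun x => mul_nonneg (sq_nonneg _) (hp.1.2.1 _)
    calc sigmaSq d n K p (bwOf d l) t
        = kernelSqAvg d K p t (bwOf d l) / (n * ∏ i, bwOf d l i) :=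
          sigmaSq_eq hK hp.1.1 n t (bwOf_pos l)
      _ ≤ (kernelSqAvg d K p t (bwOf d m) + K2sq d K * M) / (n * ∏ i, bwOf d l i) := by
          have := Finset.prod_pos fun i (_ : i ∈ Finset.univ) => bwOf_pos l i
          gcongr
      _ = kernelSqAvg d K p t (bwOf d m) / (n * ∏ i, bwOf d l i) +
            K2sq d K * M / (n * ∏ i, bwOf d l i) := add_div _ _ _
      _ ≤ kernelSqAvg d K p t (bwOf d m) / (n * ∏ i, bwOf d m i) +
            K2sq d K * M / (n * ∏ i, bwOf d k i) := by
          have h1 := prod_bwOf_anti hlm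
          have h2 := prod_bwOf_anti hlk
          gcongr
      _ = sigmaSq d n K p (bwOf d m) t + K2sq d K * M / (n * ∏ i, bwOf d k i) := by
          rw [sigmaSq_eq hK hp.1.1 n t (bwOf_pos m)]
      _ ≤ _ := add_le_add (le_max_right _ _) hlevel

end Ordering

/-- Lemma 5.2, ordering of truncated variances.
There is `c₁₂(β,L) > 0` such that for every `p ∈ 𝒫_d(β,L)` (`0 < β_i ≤ 2`), every `t` and
all (nonrandom) multi-indices `j, m` with `j ≥ j̄` componentwise:
`σ²_{t,trunc}(j ∧ m) ≤ c₁₂ max{σ²_{t,trunc}(j), σ²_{t,trunc}(m)}`, and if moreover `m ≥ j`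
componentwise then `σ²_{t,trunc}(j) ≤ c₁₂ σ²_{t,trunc}(m)`. -/
theorem statement10 (d : ℕ) (hd : 1 ≤ d) (K : Vec d → ℝ) (hK : IsProductKernel d K)
    (β : Vec d) (hβ : ∀ i, 0 < β i ∧ β i ≤ 2) (L : ℝ) (hL : 0 < L) :
    ∃ c12 : ℝ, 0 < c12 ∧
      ∀ p : Vec d → ℝ, Pclass d β L p → ∀ t : Vec d, ∀ n : ℕ, 2 ≤ n →
        ∀ j m : Fin d → ℕ, (∀ i, jbar d K β L n (p t) i ≤ (j i : ℤ)) →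
          (sigmaSqTrunc d n K p (bwOf d (fun i => min (j i) (m i))) t ≤
            c12 * max (sigmaSqTrunc d n K p (bwOf d j) t)
              (sigmaSqTrunc d n K p (bwOf d m) t)) ∧
          ((∀ i, j i ≤ m i) →
            sigmaSqTrunc d n K p (bwOf d j) t ≤ c12 * sigmaSqTrunc d n K p (bwOf d m) t) := by
  have hK2 := hK.K2sq_pos hd
  have hc := hK.c8const_pos hd (fun i => (hβ i).1) hL
  have hlog2 : 0 < Real.log 2 := Real.log_pos one_lt_two
  have hCpos : 0 < 2 + K2sq d K * c8const d K β L ^ d / Real.log 2 := by positivity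
  refine ⟨1 + (2 + K2sq d K * c8const d K β L ^ d / Real.log 2), by positivity, fun p hp t n hn j m hj => ⟨?_, fun hjm => ?_⟩⟩
  · have h := sigmaSqTrunc_le_add hd hK hβ hL hp t hn (l := fun i => min (j i) (m i)) (m := m)
      (k := j) (fun i => min_le_right _ _) (fun i => min_le_left _ _) hj fun i hi => by
        have hji : min (j i) (m i) = j i := min_eq_left (by omega)
        rw [hji]
        exact hj i
    refine h.trans ?_
    rw [add_mul (1 : ℝ), one_mul]
    exact add_le_add (le_max_right _ _)
      (mul_le_mul_of_nonneg_left (le_max_left _ _) hCpos.le)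
  · have h := sigmaSqTrunc_le_add hd hK hβ hL hp t hn (l := j) (m := m) (k := m) hjm hjm
      (fun i => (hj i).trans (by exact_mod_cast hjm i)) fun i _ => hj i
    rw [add_mul (1 : ℝ), one_mul]
    exact h
end
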